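/- arXiv:1506.03364 — 3 statements merged into one kernel-verified Lean document; each statement's English description precedes it below -/
import Mathlib

section
/- Let κ be an uncountable cardinal with κ = κ^{<κ} and let T ⊆ κ^{<κ} be a subtree. The following are equivalent: (1) [T] contains a closed-in-κ^κ subset homeomorphic to κ^2; (2) there is a continuous injection i : κ^2 → κ^κ with range contained in [T]; (3) there is an inclusion-preserving continuous injection ι : 2^{<κ} → T; (4) T contains a perfect subtree. -/
open Cardinal Set Topology

universe u

/-- The bounded topology on `K → Y`: basic open sets are determined by an
initial segment of values. -/
def bTop (K : Type u) [LinearOrder K] (Y : Type u) : TopologicalSpace (K → Y) :=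
  TopologicalSpace.generateFrom
    {U | ∃ (b : K) (s : K → Y), U = {x | ∀ i, i < b → x i = s i}}

/-- `A` is κ-compact: every open cover (for the bounded topology) has a
subcover of size `< #K`. -/
def KCompact (K : Type u) [LinearOrder K] {Y : Type u} (A : Set (K → Y)) : Prop :=
  ∀ 𝒰 : Set (Set (K → Y)), (∀ U ∈ 𝒰, IsOpen[bTop K Y] U) → A ⊆ ⋃₀ 𝒰 →
    ∃ 𝒱 ⊆ 𝒰, #𝒱 < #K ∧ A ⊆ ⋃₀ 𝒱

/-- `B` is a `K_κ` subset: a union of κ-many κ-compact sets. -/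
def IsKK (K : Type u) [LinearOrder K] (B : Set (K → K)) : Prop :=
  ∃ C : K → Set (K → K), (∀ b, KCompact K (C b)) ∧ B = ⋃ b, C b

/-- Nodes of the tree `Y^{<K}`: sequences of length `b`, for `b : K`. -/
abbrev Nd (K : Type u) [LinearOrder K] (Y : Type u) := Σ b : K, (Set.Iio b → Y)

/-- Restriction of a node to a smaller length. -/
def ndRes (K : Type u) [LinearOrder K] {Y : Type u} (p : Nd K Y) (c : K) (h : c ≤ p.1) :
    Nd K Y :=
  ⟨c, fun i => p.2 ⟨i.1, lt_of_lt_of_le i.2 h⟩⟩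

/-- Restriction of a branch `x : K → Y` to length `b`. -/
def xRes (K : Type u) [LinearOrder K] {Y : Type u} (x : K → Y) (b : K) : Nd K Y :=
  ⟨b, fun i => x i.1⟩

/-- `q` extends `p` as a sequence. -/
def NdExt (K : Type u) [LinearOrder K] {Y : Type u} (q p : Nd K Y) : Prop :=
  ∃ h : p.1 ≤ q.1, ∀ i : Set.Iio p.1, q.2 ⟨i.1, lt_of_lt_of_le i.2 h⟩ = p.2 i

/-- A subtree of `Y^{<K}`: a set of nodes closed under restriction. -/
def IsSubtree (K : Type u) [LinearOrder K] {Y : Type u} (T : Set (Nd K Y)) : Prop :=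
  ∀ p ∈ T, ∀ c, ∀ h : c ≤ p.1, ndRes K p c h ∈ T

/-- The body `[T]`: the set of `K`-branches through `T`. -/
def body (K : Type u) [LinearOrder K] {Y : Type u} (T : Set (Nd K Y)) : Set (K → Y) :=
  {x | ∀ b : K, xRes K x b ∈ T}

/-- `T` is pruned: every node is extended by a branch. -/
def Pruned (K : Type u) [LinearOrder K] {Y : Type u} (T : Set (Nd K Y)) : Prop :=
  ∀ p ∈ T, ∃ x ∈ body K T, NdExt K (xRes K x p.1) p

/-- `b` is a limit element: not least, and with no immediate predecessor. -/
def IsLimElt (K : Type u) [LinearOrder K] (b : K) : Prop :=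
  (∃ c, c < b) ∧ ∀ c, c < b → ∃ d, c < d ∧ d < b

/-- Superclosed: closed under unions of increasing sequences of length `< K`. -/
def Superclosed (K : Type u) [LinearOrder K] {Y : Type u} (T : Set (Nd K Y)) : Prop :=
  ∀ p : Nd K Y, IsLimElt K p.1 → (∀ c, ∀ h : c < p.1, ndRes K p c h.le ∈ T) → p ∈ T

/-- The values at position `p.1` realized by extensions of `p` in `T`, i.e. the
immediate successors of `p` in `T`. -/
def splitVals (K : Type u) [LinearOrder K] {Y : Type u} (T : Set (Nd K Y)) (p : Nd K Y) :
    Set Y :=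
  {a | ∃ q ∈ T, ∃ h : p.1 < q.1,
    (∀ i : Set.Iio p.1, q.2 ⟨i.1, i.2.trans h⟩ = p.2 i) ∧ q.2 ⟨p.1, h⟩ = a}

/-- A perfect tree: a nonempty superclosed subtree in which every node is
extended by a 2-splitting node. -/
def PerfectTree (K : Type u) [LinearOrder K] (T : Set (Nd K K)) : Prop :=
  T.Nonempty ∧ IsSubtree K T ∧ Superclosed K T ∧
    ∀ p ∈ T, ∃ q ∈ T, NdExt K q p ∧
      ∃ a ∈ splitVals K T q, ∃ a' ∈ splitVals K T q, a ≠ a'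

/-- A κ-Miller tree: a nonempty superclosed subtree in which every node is
extended by a κ-splitting node. -/
def MillerTree (K : Type u) [LinearOrder K] (T : Set (Nd K K)) : Prop :=
  T.Nonempty ∧ IsSubtree K T ∧ Superclosed K T ∧
    ∀ p ∈ T, ∃ q ∈ T, NdExt K q p ∧ #K ≤ #(splitVals K T q)

/-- A κ-tree: a subtree of height `K` all of whose levels have size `< #K`. -/
def KTree (K : Type u) [LinearOrder K] {Y : Type u} (T : Set (Nd K Y)) : Prop :=
  (∀ b : K, ∃ t : Set.Iio b → Y, (⟨b, t⟩ : Nd K Y) ∈ T) ∧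
    ∀ b : K, #{t : Set.Iio b → Y | (⟨b, t⟩ : Nd K Y) ∈ T} < #K

/-- A κ-Aronszajn tree: a κ-tree with no branch. -/
def Aronszajn (K : Type u) [LinearOrder K] (S : Set (Nd K K)) : Prop :=
  IsSubtree K S ∧ KTree K S ∧ body K S = ∅

/-- The tree property for `K`: every κ-tree has a branch. -/
def TreeProp (K : Type u) [LinearOrder K] : Prop :=
  ∀ T : Set (Nd K K), IsSubtree K T → KTree K T → (body K T).Nonempty

/-- weak compactness: inaccessibility together with the tree property. -/
def WComp (K : Type u) [LinearOrder K] : Prop :=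
  (#K).IsInaccessible ∧ TreeProp K

/-- `C` is homeomorphic to the generalized Baire space `K → K`. -/
def HomeoToBaire (K : Type u) [LinearOrder K] (C : Set (K → K)) : Prop :=
  letI := bTop K K
  Nonempty (↥C ≃ₜ (K → K))

/-- `C` is homeomorphic to the generalized Cantor space `K → ULift.{u} Bool`. -/
def HomeoToCantor (K : Type u) [LinearOrder K] (C : Set (K → K)) : Prop :=
  letI := bTop K K
  letI : TopologicalSpace (K → ULift.{u} Bool) := bTop K (ULift.{u} Bool)
  Nonempty (↥C ≃ₜ (K → ULift.{u} Bool))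

/-- The Hurewicz dichotomy for `A`. -/
def HD (K : Type u) [LinearOrder K] (A : Set (K → K)) : Prop :=
  (∃ B, IsKK K B ∧ A ⊆ B) ∨
    ∃ C ⊆ A, IsClosed[bTop K K] C ∧ HomeoToBaire K C

/-- The Miller-tree Hurewicz dichotomy for `A`. -/
def MillerHD (K : Type u) [LinearOrder K] (A : Set (K → K)) : Prop :=
  (∃ B, IsKK K B ∧ A ⊆ B) ∨ ∃ T, MillerTree K T ∧ body K T ⊆ A

/-- Σ¹₁ subsets of `K → K`: projections of closed subsets of the product. -/
def Sigma11 (K : Type u) [LinearOrder K] (A : Set (K → K)) : Prop :=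
  letI := bTop K K
  ∃ C : Set ((K → K) × (K → K)), IsClosed C ∧ A = Prod.fst '' C

/-- The κ-perfect set property. -/
def PSP (K : Type u) [LinearOrder K] (A : Set (K → K)) : Prop :=
  #A ≤ #K ∨ ∃ C ⊆ A, IsClosed[bTop K K] C ∧ HomeoToCantor K C

/-- `A ⊆ K → K` is bounded. -/
def BddSet (K : Type u) [LinearOrder K] (A : Set (K → K)) : Prop :=
  ∃ x : K → K, ∀ y ∈ A, ∀ i, y i ≤ x i

/-- `A ⊆ K → K` is eventually bounded. -/
def EvBddSet (K : Type u) [LinearOrder K] (A : Set (K → K)) : Prop :=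
  ∃ x : K → K, ∀ y ∈ A, ∃ b : K, ∀ i, b ≤ i → y i ≤ x i

/-- Nodes of the product tree `K^{<K} × K^{<K}` (pairs of equal length). -/
abbrev PNd (K : Type u) [LinearOrder K] := Σ b : K, (Set.Iio b → K) × (Set.Iio b → K)

/-- Subtree of the product tree: closed under simultaneous restriction. -/
def IsPSubtree (K : Type u) [LinearOrder K] (T : Set (PNd K)) : Prop :=
  ∀ p ∈ T, ∀ c, ∀ h : c ≤ p.1,
    (⟨c, fun i => p.2.1 ⟨i.1, lt_of_lt_of_le i.2 h⟩,
        fun i => p.2.2 ⟨i.1, lt_of_lt_of_le i.2 h⟩⟩ : PNd K) ∈ T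

/-- The projection `p[T]` of the set of branches of a product tree to the first
coordinate. -/
def pProj (K : Type u) [LinearOrder K] (T : Set (PNd K)) : Set (K → K) :=
  {x | ∃ y : K → K, ∀ b : K,
    (⟨b, fun i => x i.1, fun i => y i.1⟩ : PNd K) ∈ T}

/-- An `∃^x`-perfect embedding into a product tree `T`. -/
def PerfEmb (K : Type u) [LinearOrder K] (T : Set (PNd K)) (e : Nd K (ULift.{u} Bool) → PNd K) : Prop :=
  (∀ u, e u ∈ T) ∧
  (∀ u u' : Nd K (ULift.{u} Bool), ∀ h : u.1 < u'.1,
     (∀ i : Set.Iio u.1, u'.2 ⟨i.1, i.2.trans h⟩ = u.2 i) →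
     ∃ h' : (e u).1 < (e u').1,
       (∀ i : Set.Iio (e u).1, (e u').2.1 ⟨i.1, i.2.trans h'⟩ = (e u).2.1 i) ∧
       (∀ i : Set.Iio (e u).1, (e u').2.2 ⟨i.1, i.2.trans h'⟩ = (e u).2.2 i)) ∧
  (∀ u u' : Nd K (ULift.{u} Bool), ¬ NdExt K u u' → ¬ NdExt K u' u →
     ¬ NdExt K ⟨(e u).1, (e u).2.1⟩ ⟨(e u').1, (e u').2.1⟩ ∧
     ¬ NdExt K ⟨(e u').1, (e u').2.1⟩ ⟨(e u).1, (e u).2.1⟩) ∧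
  (∀ u : Nd K (ULift.{u} Bool), IsLimElt K u.1 → ∀ d, d < (e u).1 →
     ∃ c, ∃ h : c < u.1, d < (e (ndRes K u c h.le)).1)

/-- The immediate extension `u⌢⟨a⟩` of a node `u` by a value `a`. -/
def extNd (K : Type u) [LinearOrder K] [SuccOrder K] (u : Nd K K) (a : K) : Nd K K :=
  ⟨Order.succ u.1, fun i => if h : i.1 < u.1 then u.2 ⟨i.1, h⟩ else a⟩

/-- An `∃^x`-superperfect embedding into a product tree `T`. -/
def SuperPerfEmb (K : Type u) [LinearOrder K] [SuccOrder K] (T : Set (PNd K))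
    (e : Nd K K → PNd K) : Prop :=
  (∀ u, e u ∈ T) ∧
  (∀ u u' : Nd K K, ∀ h : u.1 < u'.1,
     (∀ i : Set.Iio u.1, u'.2 ⟨i.1, i.2.trans h⟩ = u.2 i) →
     ∃ h' : (e u).1 < (e u').1,
       (∀ i : Set.Iio (e u).1, (e u').2.1 ⟨i.1, i.2.trans h'⟩ = (e u).2.1 i) ∧
       (∀ i : Set.Iio (e u).1, (e u').2.2 ⟨i.1, i.2.trans h'⟩ = (e u).2.2 i)) ∧
  (∀ u : Nd K K, IsLimElt K u.1 → ∀ d, d < (e u).1 →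
     ∃ c, ∃ h : c < u.1, d < (e (ndRes K u c h.le)).1) ∧
  (∀ u : Nd K K, ∃ γ : K, (e u).1 ≤ γ ∧
     ∃ hlen : ∀ a : K, γ < (e (extNd K u a)).1,
       ∀ a b : K, a ≠ b →
         (∀ i : Set.Iio γ,
           (e (extNd K u a)).2.1 ⟨i.1, i.2.trans (hlen a)⟩ =
           (e (extNd K u b)).2.1 ⟨i.1, i.2.trans (hlen b)⟩) ∧
         (e (extNd K u a)).2.1 ⟨γ, hlen a⟩ ≠ (e (extNd K u b)).2.1 ⟨γ, hlen b⟩)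

namespace PCT

variable {K : Type u} [LinearOrder K]

theorem xRes_congr {Y : Type u} {x y : K → Y} {b : K} (h : ∀ i < b, x i = y i) :
    xRes K x b = xRes K y b := by
  unfold xRes
  congr 1
  funext i
  exact h i.1 i.2

theorem xRes_inj {Y : Type u} {x y : K → Y} {b c : K} (h : xRes K x b = xRes K y c) :
    b = c ∧ ∀ i < b, x i = y i := by
  unfold xRes at h
  have h1 : b = c := congrArg Sigma.fst h
  subst h1
  refine ⟨rfl, fun i hi => ?_⟩
  have h2 := eq_of_heq (Sigma.mk.inj h).2
  exact congrFun h2 ⟨i, hi⟩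

/-- every node is a restriction of a total function -/
theorem exists_xRes {Y : Type u} (y0 : Y) (p : Nd K Y) : ∃ x : K → Y, p = xRes K x p.1 := by
  classical
  obtain ⟨b, t⟩ := p
  refine ⟨fun i => if h : i < b then t ⟨i, h⟩ else y0, ?_⟩
  unfold xRes
  congr 1
  funext i
  have := i.2
  simp only [mem_Iio] at this
  simp [this]

theorem isOpen_iff [Nonempty K] {Y : Type u} (U : Set (K → Y)) :
    IsOpen[bTop K Y] U ↔ ∀ x ∈ U, ∃ b : K, ∀ y, (∀ i < b, y i = x i) → y ∈ U := by
  letI := bTop K Y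
  constructor
  · intro h
    induction h with
    | basic s hs =>
      obtain ⟨b, s, rfl⟩ := hs
      intro x hx
      exact ⟨b, fun y hy i hi => (hy i hi).trans (hx i hi)⟩
    | univ => intro x _; exact ⟨Classical.arbitrary K, fun _ _ => trivial⟩
    | inter s t _ _ hs ht =>
      intro x hx
      obtain ⟨b, hb⟩ := hs x hx.1
      obtain ⟨c, hc⟩ := ht x hx.2
      exact ⟨max b c, fun y hy => ⟨hb y fun i hi => hy i (lt_max_of_lt_left hi),
        hc y fun i hi => hy i (lt_max_of_lt_right hi)⟩⟩
    | sUnion S _ hS =>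
      rintro x ⟨s, hs, hx⟩
      obtain ⟨b, hb⟩ := hS s hs x hx
      exact ⟨b, fun y hy => ⟨s, hs, hb y hy⟩⟩
  · intro h
    choose! b hb using h
    have : U = ⋃ x ∈ U, {y | ∀ i, i < b x → y i = x i} := by
      ext y
      simp only [mem_iUnion, mem_setOf_eq]
      constructor
      · intro hy; exact ⟨y, hy, fun _ _ => rfl⟩
      · rintro ⟨x, hx, hxy⟩; exact hb x hx y hxy
    rw [this]
    refine isOpen_biUnion fun x _ => ?_
    exact TopologicalSpace.isOpen_generateFrom_of_mem ⟨b x, x, rfl⟩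

theorem continuous_iff [Nonempty K] {Y Z : Type u} (f : (K → Y) → (K → Z)) :
    Continuous[bTop K Y, bTop K Z] f ↔
      ∀ x b, ∃ c, ∀ y, (∀ i < c, y i = x i) → ∀ i < b, f y i = f x i := by
  letI := bTop K Y
  letI := bTop K Z
  constructor
  · intro h x b
    have h1 : IsOpen {z : K → Z | ∀ i, i < b → z i = f x i} :=
      TopologicalSpace.isOpen_generateFrom_of_mem ⟨b, f x, rfl⟩
    have h2 := (isOpen_iff _).1 (h1.preimage h) x (fun _ _ => rfl)
    exact h2
  · intro h
    refine continuous_def.2 fun U hU => (isOpen_iff _).2 fun x hx => ?_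
    obtain ⟨b, hb⟩ := (isOpen_iff _).1 hU (f x) hx
    obtain ⟨c, hc⟩ := h x b
    exact ⟨c, fun y hy => hb _ (hc y hy)⟩

theorem exists_first_diff [WellFoundedLT K] {Y : Type u} {x y : K → Y} {b : K}
    (h : ¬ ∀ i < b, x i = y i) : ∃ a < b, (∀ i < a, x i = y i) ∧ x a ≠ y a := by
  push Not at h
  obtain ⟨a, ha, hmin⟩ := WellFounded.has_min (wellFounded_lt (α := K)) {i | i < b ∧ x i ≠ y i} h
  refine ⟨a, ha.1, fun i hi => ?_, ha.2⟩
  by_contra hne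
  exact hmin i ⟨hi.trans ha.1, hne⟩ hi

theorem exists_first_diff' [WellFoundedLT K] {Y : Type u} {x y : K → Y}
    (h : x ≠ y) : ∃ a, (∀ i < a, x i = y i) ∧ x a ≠ y a := by
  have h : ∃ i, x i ≠ y i := Function.ne_iff.1 h
  obtain ⟨a, ha, hmin⟩ := WellFounded.has_min (wellFounded_lt (α := K)) {i | x i ≠ y i} h
  refine ⟨a, fun i hi => ?_, ha⟩
  by_contra hne
  exact hmin i hne hi

/-- regularity -/
theorem bdd (hseg : ∀ b : K, #(Set.Iio b) < #K) (hunc : ℵ₀ < #K)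
    (hpow : Cardinal.powerlt #K #K = #K) (A : Set K) (hA : #A < #K) : ∃ l : K, ∀ a ∈ A, a < l := by
  by_contra hcon
  push Not at hcon
  have hIic : ∀ a : K, #(Set.Iic a) < #K := by
    intro a
    have : Set.Iic a = insert a (Set.Iio a) := by
      ext i; simp [le_iff_eq_or_lt]
    rw [this]
    refine (mk_insert_le).trans_lt ?_
    exact add_lt_of_lt hunc.le (hseg a) (one_lt_aleph0.trans hunc)
  have h1 : #K ≤ Cardinal.sum (fun a : A => #(Set.Iic a.1)) := by
    have hU : (⋃ a : A, Set.Iic a.1) = Set.univ := by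
      ext i
      simp only [mem_iUnion, mem_Iic, mem_univ, iff_true]
      obtain ⟨a, ha, h⟩ := hcon i
      exact ⟨⟨a, ha⟩, h⟩
    calc #K = #(Set.univ : Set K) := mk_univ.symm
      _ = #(⋃ a : A, Set.Iic a.1) := by rw [hU]
      _ ≤ _ := mk_iUnion_le_sum_mk
  have h2 : Cardinal.sum (fun a : A => #(Set.Iic a.1)) < Cardinal.prod (fun _ : A => #K) :=
    sum_lt_prod _ _ fun a => hIic a.1
  rw [prod_const, lift_id, lift_id] at h2
  have h3 : #K ^ #A ≤ Cardinal.powerlt #K #K := le_powerlt _ hA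
  rw [hpow] at h3
  exact absurd (h1.trans_lt (h2.trans_le h3)) (lt_irrefl _)

/-- bounded families -/
def Reg (K : Type u) [LinearOrder K] : Prop :=
  (∀ (b : K) (g : K → K), ∃ l, ∀ c < b, g c < l) ∧ (∀ g : ℕ → K, ∃ l, ∀ n, g n < l) ∧ Nonempty K

theorem reg (hseg : ∀ b : K, #(Set.Iio b) < #K) (hunc : ℵ₀ < #K)
    (hpow : Cardinal.powerlt #K #K = #K) : Reg K := by
  refine ⟨fun b g => ?_, fun g => ?_, ?_⟩
  · obtain ⟨l, hl⟩ := bdd hseg hunc hpow (g '' Set.Iio b) (mk_image_le.trans_lt (hseg b))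
    exact ⟨l, fun c hc => hl _ ⟨c, hc, rfl⟩⟩
  · obtain ⟨l, hl⟩ := bdd hseg hunc hpow (Set.range g)
      ((countable_range g).le_aleph0.trans_lt hunc)
    exact ⟨l, fun c => hl _ ⟨c, rfl⟩⟩
  · exact mk_ne_zero_iff.1 (ne_of_gt (aleph0_pos.trans hunc))

theorem Reg.nomax (h : Reg K) (b : K) : ∃ c, b < c := by
  obtain ⟨l, hl⟩ := h.2.1 (fun _ => b)
  exact ⟨l, hl 0⟩

/-- closing off -/
theorem Reg.close [WellFoundedLT K] (hr : Reg K) (f : K → K) (b : K) :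
    ∃ δ, b < δ ∧ ∀ d < δ, ∃ c, d < c ∧ c < δ ∧ f c < δ := by
  choose nx hnx using hr.nomax
  let a : ℕ → K := fun n => Nat.rec b (fun _ a => nx (max a (f a))) n
  have ha : ∀ n, max (a n) (f (a n)) < a (n+1) := fun n => hnx _
  have hs : ({l | ∀ n, a n < l} : Set K).Nonempty := hr.2.1 a
  obtain ⟨δ, hδ, hmin⟩ := WellFounded.has_min (wellFounded_lt (α := K)) _ hs
  refine ⟨δ, hδ 0, fun d hd => ?_⟩
  have : ¬ ∀ n, a n < d := fun h => hmin d h hd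
  push Not at this
  obtain ⟨n, hn⟩ := this
  refine ⟨a (n+1), hn.trans_lt ((le_max_left _ _).trans_lt (ha n)), hδ (n+1), ?_⟩
  exact ((le_max_right _ _).trans_lt (ha (n+1))).trans (hδ (n+2))

theorem le_of_strict [WellFoundedLT K] {g : K → K} (h : ∀ a b, a < b → g a < g b) (b : K) :
    b ≤ g b := by
  by_contra hb
  push Not at hb
  obtain ⟨a, ha, hmin⟩ := WellFounded.has_min (wellFounded_lt (α := K)) {i | g i < i} ⟨b, hb⟩
  exact hmin (g a) (h _ _ ha) ha

/-- strong embedding -/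
def Emb (K : Type u) [LinearOrder K] (T : Set (Nd K K)) : Prop :=
  ∃ (Φ : (K → ULift.{u} Bool) → (K → K)) (ℓ : (K → ULift.{u} Bool) → K → K),
    (∀ x y b, (∀ i < b, x i = y i) → ℓ x b = ℓ y b ∧ ∀ i < ℓ x b, Φ x i = Φ y i) ∧
    (∀ x a b, a < b → ℓ x a < ℓ x b) ∧
    (∀ x b, IsLimElt K b → ∀ d < ℓ x b, ∃ c < b, d < ℓ x c) ∧
    (∀ x y b, (∀ i < b, x i = y i) → x b ≠ y b →
      ∃ γ, (∀ b' > b, γ < ℓ x b' ∧ γ < ℓ y b') ∧ Φ x γ ≠ Φ y γ) ∧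
    ∀ x, Φ x ∈ body K T

theorem core [WellFoundedLT K] (hr : Reg K) {T : Set (Nd K K)} (hT : IsSubtree K T)
    {Z : Type u} (f : Z → K) (Q : K → (K → Z) → Prop)
    (hcongr : ∀ b X Y, Q b X → (∀ i < b, X i = Y i) → Q b Y)
    (hlim : ∀ b X, (∃ c, c < b) → (∀ d < b, ∃ c, d < c ∧ c < b ∧ Q c X) → Q b X)
    (p0 : K × (K → Z)) (hp0 : Q p0.1 p0.2)
    (hsplit : ∀ b X, Q b X → ∃ b0 X0 b1 X1, Q b0 X0 ∧ Q b1 X1 ∧ b ≤ b0 ∧ b ≤ b1 ∧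
      (∀ i < b, X0 i = X i) ∧ (∀ i < b, X1 i = X i) ∧
      ∃ γ, γ < b0 ∧ γ < b1 ∧ f (X0 γ) ≠ f (X1 γ))
    (hQT : ∀ b X, Q b X → xRes K (f ∘ X) b ∈ T) : Emb K T := by
  classical
  -- step function
  have hstep : ∀ p : K × (K → Z), ∃ g : ULift.{u} Bool → K × (K → Z), Q p.1 p.2 →
      (∀ j, Q (g j).1 (g j).2 ∧ p.1 < (g j).1 ∧ ∀ i < p.1, (g j).2 i = p.2 i) ∧
      ∀ j j', j ≠ j' → ∃ γ, γ < (g j).1 ∧ γ < (g j').1 ∧ f ((g j).2 γ) ≠ f ((g j').2 γ) := by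
    intro p
    by_cases hp : Q p.1 p.2
    · obtain ⟨b0, X0, b1, X1, h0, h1, hb0, hb1, e0, e1, γ, g0, g1, hne⟩ := hsplit _ _ hp
      have hγ : p.1 ≤ γ := by
        by_contra hlt
        push Not at hlt
        exact hne (by rw [e0 _ hlt, e1 _ hlt])
      refine ⟨fun j => if j.down then (b0, X0) else (b1, X1), fun _ => ⟨?_, ?_⟩⟩
      · rintro ⟨j⟩
        cases j
        · exact ⟨h1, hγ.trans_lt g1, e1⟩
        · exact ⟨h0, hγ.trans_lt g0, e0⟩
      · rintro ⟨j⟩ ⟨j'⟩ hj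
        cases j <;> cases j'
        · exact absurd rfl hj
        · exact ⟨γ, g1, g0, hne.symm⟩
        · exact ⟨γ, g0, g1, hne⟩
        · exact absurd rfl hj
    · exact ⟨fun _ => p, fun h => absurd h hp⟩
  choose step hstep using hstep
  -- lub
  have hlub : ∀ (b : K) (g : K → K) (p : K), ∃ l, p ≤ l ∧ (∀ c < b, g c ≤ l) ∧
      ∀ d < l, d < p ∨ ∃ c < b, d < g c := by
    intro b g p
    have hne : ({l | p ≤ l ∧ ∀ c < b, g c ≤ l} : Set K).Nonempty := by
      obtain ⟨l, hl⟩ := hr.1 b g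
      exact ⟨max p l, le_max_left _ _, fun c hc => (hl c hc).le.trans (le_max_right _ _)⟩
    obtain ⟨l, hl, hmin⟩ := WellFounded.has_min (wellFounded_lt (α := K)) _ hne
    refine ⟨l, hl.1, hl.2, fun d hd => ?_⟩
    by_contra hcon
    push Not at hcon
    exact hmin d ⟨hcon.1, hcon.2⟩ hd
  choose lub hlub using hlub
  -- union
  let U : K → (K → K × (K → Z)) → K × (K → Z) := fun b G =>
    (lub b (fun c => (G c).1) p0.1,
      fun i => if h : ∃ c < b, i < (G c).1 then (G h.choose).2 i else p0.2 i)
  let F : (K → ULift.{u} Bool) → ∀ b : K, (∀ c, c < b → K × (K → Z)) → K × (K → Z) :=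
    fun x b G => U b (fun c => if h : c < b then step (G c h) (x c) else p0)
  let E : (K → ULift.{u} Bool) → K → K × (K → Z) := fun x =>
    WellFounded.fix (wellFounded_lt (α := K)) (F x)
  have hE : ∀ x b, E x b = U b (fun c => if c < b then step (E x c) (x c) else p0) := by
    intro x b
    have := WellFounded.fix_eq (wellFounded_lt (α := K)) (F x) b
    exact this
  have hloc : ∀ x y b, (∀ i < b, x i = y i) → E x b = E y b := by
    intro x y b
    induction b using WellFoundedLT.induction with
    | ind b ih =>
      intro h
      rw [hE, hE]
      congr 1
      funext c
      split_ifs with hc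
      · rw [ih c hc fun i hi => h i (hi.trans hc), h c hc]
      · rfl
  -- the main invariant
  have hinv : ∀ x b, Q (E x b).1 (E x b).2 ∧
      (p0.1 ≤ (E x b).1 ∧ ∀ i < p0.1, (E x b).2 i = p0.2 i) ∧
      (∀ c < b, (step (E x c) (x c)).1 ≤ (E x b).1 ∧
        ∀ i < (step (E x c) (x c)).1, (E x b).2 i = (step (E x c) (x c)).2 i) ∧
      (∀ d < (E x b).1, d < p0.1 ∨ ∃ c < b, d < (step (E x c) (x c)).1) := by
    intro x b
    induction b using WellFoundedLT.induction with
    | ind b ih =>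
      set G : K → K × (K → Z) := fun c => if c < b then step (E x c) (x c) else p0 with hG
      have hGc : ∀ c < b, G c = step (E x c) (x c) := fun c hc => by simp [hG, hc]
      have hEb : E x b = U b G := hE x b
      have hst : ∀ c < b, Q (G c).1 (G c).2 ∧ (E x c).1 < (G c).1 ∧
          ∀ i < (E x c).1, (G c).2 i = (E x c).2 i := by
        intro c hc
        rw [hGc c hc]
        exact (hstep (E x c) (ih c hc).1).1 (x c)
      have hcoh : ∀ c < b, ∀ c' < c, (G c').1 < (G c).1 ∧
          ∀ i < (G c').1, (G c).2 i = (G c').2 i := by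
        intro c hc c' hc'
        have h1 := (ih c hc).2.2.1 c' hc'
        rw [← hGc c' (hc'.trans hc)] at h1
        have h2 := hst c hc
        refine ⟨h1.1.trans_lt h2.2.1, fun i hi => ?_⟩
        rw [h2.2.2 i (hi.trans_le h1.1), h1.2 i hi]
      have hp : ∀ c < b, p0.1 < (G c).1 ∧ ∀ i < p0.1, (G c).2 i = p0.2 i := by
        intro c hc
        have h1 := (ih c hc).2.1
        have h2 := hst c hc
        refine ⟨h1.1.trans_lt h2.2.1, fun i hi => ?_⟩
        rw [h2.2.2 i (hi.trans_le h1.1), h1.2 i hi]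
      obtain ⟨l1, l2, l3⟩ := hlub b (fun c => (G c).1) p0.1
      have hL : (E x b).1 = lub b (fun c => (G c).1) p0.1 := by rw [hEb]
      rw [← hL] at l1 l2 l3
      have hX : ∀ i, (E x b).2 i =
          if h : ∃ c < b, i < (G c).1 then (G h.choose).2 i else p0.2 i := by
        intro i; rw [hEb]
      have hXG : ∀ c < b, ∀ i < (G c).1, (E x b).2 i = (G c).2 i := by
        intro c hc i hi
        have h : ∃ c < b, i < (G c).1 := ⟨c, hc, hi⟩
        rw [hX, dif_pos h]
        obtain ⟨h1, h2⟩ := h.choose_spec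
        rcases lt_trichotomy h.choose c with h3 | h3 | h3
        · exact ((hcoh c hc _ h3).2 i h2).symm
        · rw [h3]
        · exact (hcoh _ h1 _ h3).2 i hi
      have hXp : ∀ i < p0.1, (E x b).2 i = p0.2 i := by
        intro i hi
        by_cases h : ∃ c < b, i < (G c).1
        · obtain ⟨c, hc, hic⟩ := h
          rw [hXG c hc i hic, (hp c hc).2 i hi]
        · rw [hX, dif_neg h]
      refine ⟨?_, ⟨l1, hXp⟩, ?_, ?_⟩
      · by_cases h0 : ∃ c, c < b
        · by_cases hmax : ∃ c < b, ∀ d < b, d ≤ c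
          · obtain ⟨c, hc, hmax⟩ := hmax
            have hLc : (E x b).1 = (G c).1 := by
              refine le_antisymm ?_ (l2 c hc)
              by_contra hlt
              push Not at hlt
              rcases l3 _ hlt with h | ⟨d, hd, h⟩
              · exact absurd h (hp c hc).1.not_gt
              · rcases (hmax d hd).eq_or_lt with rfl | h'
                · exact lt_irrefl _ h
                · exact absurd h (hcoh c hc d h').1.not_gt
            rw [hLc]
            exact hcongr _ _ _ (hst c hc).1 fun i hi => (hXG c hc i hi).symm
          · push Not at hmax
            have key : ∀ c < b, (G c).1 < (E x b).1 := by
              intro c hc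
              obtain ⟨d, hd, hcd⟩ := hmax c hc
              exact (hcoh d hd c hcd).1.trans_le (l2 d hd)
            refine hlim _ _ ?_ ?_
            · obtain ⟨c, hc⟩ := h0
              exact ⟨_, key c hc⟩
            · intro d hd
              have : ∃ c < b, d < (G c).1 := by
                rcases l3 d hd with h | h
                · obtain ⟨c, hc⟩ := h0
                  exact ⟨c, hc, h.trans (hp c hc).1⟩
                · exact h
              obtain ⟨c, hc, hdc⟩ := this
              exact ⟨_, hdc, key c hc, hcongr _ _ _ (hst c hc).1
                fun i hi => (hXG c hc i hi).symm⟩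
        · have hLc : (E x b).1 = p0.1 := by
            refine le_antisymm ?_ l1
            by_contra hlt
            push Not at hlt
            rcases l3 _ hlt with h | ⟨d, hd, h⟩
            · exact lt_irrefl _ h
            · exact h0 ⟨d, hd⟩
          rw [hLc]
          exact hcongr _ _ _ hp0 fun i hi => (hXp i hi).symm
      · intro c hc
        rw [← hGc c hc]
        exact ⟨l2 c hc, hXG c hc⟩
      · intro d hd
        rcases l3 d hd with h | ⟨c, hc, h⟩
        · exact Or.inl h
        · right
          refine ⟨c, hc, ?_⟩
          rw [← hGc c hc]
          exact h
  have hmono : ∀ x a b, a < b → (E x a).1 < (E x b).1 := by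
    intro x a b hab
    have h1 := ((hstep (E x a) (hinv x a).1).1 (x a)).2.1
    exact h1.trans_le ((hinv x b).2.2.1 a hab).1
  have hcoh : ∀ x a b, a < b → ∀ i < (E x a).1, (E x b).2 i = (E x a).2 i := by
    intro x a b hab i hi
    have h1 := ((hstep (E x a) (hinv x a).1).1 (x a)).2
    rw [((hinv x b).2.2.1 a hab).2 i (hi.trans h1.1), h1.2 i hi]
  choose nx hnx using hr.nomax
  have hnxE : ∀ x i, i < (E x (nx i)).1 := fun x i =>
    (hnx i).trans_le (le_of_strict (hmono x) _)
  have hΦ : ∀ x b, ∀ i < (E x b).1, (E x (nx i)).2 i = (E x b).2 i := by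
    intro x b i hi
    rcases lt_trichotomy b (nx i) with h | h | h
    · exact hcoh x _ _ h i hi
    · rw [h]
    · exact (hcoh x _ _ h i (hnxE x i)).symm
  refine ⟨fun x i => f ((E x (nx i)).2 i), fun x b => (E x b).1, ?_, hmono, ?_, ?_, ?_⟩
  · intro x y b h
    have h1 := hloc x y b h
    refine ⟨by simp only [h1], fun i hi => ?_⟩
    simp only
    rw [hΦ x b i hi, hΦ y b i (by rw [← h1]; exact hi), h1]
  · intro x b hb d hd
    obtain ⟨⟨c0, hc0⟩, hl⟩ := hb
    rcases (hinv x b).2.2.2 d hd with h | ⟨c, hc, h⟩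
    · exact ⟨c0, hc0, h.trans_le (hinv x c0).2.1.1⟩
    · obtain ⟨c', hcc', hc'⟩ := hl c hc
      exact ⟨c', hc', h.trans_le ((hinv x c').2.2.1 c hcc').1⟩
  · intro x y b h hne
    have h1 := hloc x y b h
    obtain ⟨γ, g1, g2, hγ⟩ := (hstep (E x b) (hinv x b).1).2 _ _ hne
    refine ⟨γ, fun b' hb' => ⟨?_, ?_⟩, ?_⟩
    · exact g1.trans_le ((hinv x b').2.2.1 b hb').1
    · rw [h1] at g2
      exact g2.trans_le ((hinv y b').2.2.1 b hb').1
    · have hx := (hinv x (nx b)).2.2.1 b (hnx b)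
      have hy := (hinv y (nx b)).2.2.1 b (hnx b)
      simp only
      rw [← h1] at hy
      rw [hΦ x (nx b) γ (g1.trans_le hx.1), hΦ y (nx b) γ (g2.trans_le hy.1),
        hx.2 γ g1, hy.2 γ g2]
      exact hγ
  · intro x b
    have h1 := hQT _ _ (hinv x b).1
    have h2 := hT _ h1 b (le_of_strict (hmono x) b)
    have h3 : xRes K (fun i => f ((E x (nx i)).2 i)) b = xRes K (f ∘ (E x b).2) b := by
      apply xRes_congr
      intro i hi
      simp only [Function.comp]
      rw [hΦ x b i (hi.trans_le (le_of_strict (hmono x) b))]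
    rw [h3]
    exact h2

theorem two_to_emb [WellFoundedLT K] (hr : Reg K) {T : Set (Nd K K)} (hT : IsSubtree K T)
    (h : ∃ i : (K → ULift.{u} Bool) → (K → K),
        Continuous[bTop K (ULift.{u} Bool), bTop K K] i ∧
        Function.Injective i ∧ Set.range i ⊆ body K T) : Emb K T := by
  classical
  obtain ⟨φ, hc, hinj, hran⟩ := h
  haveI := hr.2.2
  rw [continuous_iff] at hc
  have hext : ∀ x (b : K), ∃ δ, b < δ ∧ ∀ y, (∀ i < δ, y i = x i) → ∀ i < δ, φ y i = φ x i := by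
    intro x b
    choose m hm using hc x
    obtain ⟨δ, hδ, h⟩ := hr.close m b
    refine ⟨δ, hδ, fun y hy i hi => ?_⟩
    obtain ⟨c, hc1, hc2, hc3⟩ := h i hi
    exact hm c y (fun j hj => hy j (hj.trans hc3)) i hc1
  let Q : K → (K → ULift.{u} Bool × K) → Prop := fun b X =>
    ∀ y, (∀ i < b, y i = (X i).1) → ∀ i < b, φ y i = (X i).2
  obtain ⟨δ0, -, h0⟩ := hext (fun _ => ⟨false⟩) (Classical.arbitrary K)
  refine core hr hT (Z := ULift.{u} Bool × K) Prod.snd Q ?_ ?_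
    (δ0, fun i => (⟨false⟩, φ (fun _ => ⟨false⟩) i)) h0 ?_ ?_
  · intro b X Y hX hXY y hy i hi
    rw [← hXY i hi]
    exact hX y (fun j hj => by rw [hy j hj, hXY j hj]) i hi
  · intro b X _ h y hy i hi
    obtain ⟨c, hc1, hc2, hc3⟩ := h i hi
    exact hc3 y (fun j hj => hy j (hj.trans hc2)) i hc1
  · intro b X hQ
    let x0 : K → ULift.{u} Bool := fun i => if i < b then (X i).1 else ⟨false⟩
    let x1 : K → ULift.{u} Bool := fun i => if i < b then (X i).1 else ⟨true⟩
    have hx0 : ∀ i < b, x0 i = (X i).1 := fun i hi => by simp [x0, hi]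
    have hx1 : ∀ i < b, x1 i = (X i).1 := fun i hi => by simp [x1, hi]
    have hne : x0 ≠ x1 := by
      intro h
      have := congrFun h b
      simp [x0, x1] at this
    obtain ⟨γ, hγ⟩ := Function.ne_iff.1 (hinj.ne hne)
    obtain ⟨b0, hb0, e0⟩ := hext x0 (max b γ)
    obtain ⟨b1, hb1, e1⟩ := hext x1 (max b γ)
    rw [max_lt_iff] at hb0 hb1
    refine ⟨b0, fun i => (x0 i, φ x0 i), b1, fun i => (x1 i, φ x1 i), e0, e1, hb0.1.le, hb1.1.le,
      fun i hi => ?_, fun i hi => ?_, γ, hb0.2, hb1.2, hγ⟩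
    · exact Prod.ext (hx0 i hi) (hQ x0 hx0 i hi)
    · exact Prod.ext (hx1 i hi) (hQ x1 hx1 i hi)
  · intro b X hQ
    have h1 := hran ⟨fun i => (X i).1, rfl⟩ b
    have h2 : xRes K (Prod.snd ∘ X) b = xRes K (φ fun i => (X i).1) b :=
      xRes_congr fun i hi => (hQ _ (fun _ _ => rfl) i hi).symm
    rw [h2]
    exact h1

theorem four_to_emb [WellFoundedLT K] (hr : Reg K) {T : Set (Nd K K)} (hT : IsSubtree K T)
    (h : ∃ S, S ⊆ T ∧ PerfectTree K S) : Emb K T := by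
  obtain ⟨S, hST, ⟨p, hp⟩, hS, hsc, hsp⟩ := h
  haveI := hr.2.2
  obtain ⟨x, hx⟩ := exists_xRes (Classical.arbitrary K) p
  refine core hr hT (Z := K) id (fun b X => xRes K X b ∈ S) ?_ ?_ (p.1, x) (hx ▸ hp) ?_ ?_
  · intro b X Y h hXY
    rw [← xRes_congr hXY]; exact h
  · intro b X h0 h
    refine hsc _ ⟨h0, fun c hc => ?_⟩ ?_
    · obtain ⟨d, h1, h2, -⟩ := h c hc
      exact ⟨d, h1, h2⟩
    · intro c hc
      obtain ⟨d, h1, h2, h3⟩ := h c hc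
      exact hS _ h3 c h1.le
  · intro b X hX
    obtain ⟨q, hq, ⟨hbq, hqX⟩, a, ⟨r, hr1, hr2, hr3, hr4⟩, a', ⟨s, hs1, hs2, hs3, hs4⟩, hne⟩ :=
      hsp _ hX
    obtain ⟨xr, hxr⟩ := exists_xRes (Classical.arbitrary K) r
    obtain ⟨xs, hxs⟩ := exists_xRes (Classical.arbitrary K) s
    obtain ⟨br, tr⟩ := r
    obtain ⟨bs, ts⟩ := s
    obtain ⟨bq, tq⟩ := q
    have htr := eq_of_heq (Sigma.mk.inj hxr).2
    have hts := eq_of_heq (Sigma.mk.inj hxs).2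
    simp only [xRes] at htr hts hbq hqX hr2 hr3 hr4 hs2 hs3 hs4
    subst htr hts
    refine ⟨br, xr, bs, xs, hr1, hs1, hbq.trans hr2.le, hbq.trans hs2.le, ?_, ?_, bq, hr2, hs2, ?_⟩
    · intro i hi
      exact (hr3 ⟨i, hi.trans_le hbq⟩).trans (hqX ⟨i, hi⟩)
    · intro i hi
      exact (hs3 ⟨i, hi.trans_le hbq⟩).trans (hqX ⟨i, hi⟩)
    · simp only [id]
      intro he
      exact hne (hr4.symm.trans (he.trans hs4))
  · intro b X h
    exact hST h

theorem three_to_two [WellFoundedLT K] (hr : Reg K) {T : Set (Nd K K)} (hT : IsSubtree K T)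
    (h : ∃ ι : Nd K (ULift.{u} Bool) → Nd K K, (∀ u, ι u ∈ T) ∧
        Function.Injective ι ∧
        (∀ u u' : Nd K (ULift.{u} Bool), NdExt K u' u → NdExt K (ι u') (ι u)) ∧
        (∀ u : Nd K (ULift.{u} Bool), IsLimElt K u.1 → ∀ d, d < (ι u).1 →
          ∃ c, ∃ h : c < u.1, d < (ι (ndRes K u c h.le)).1)) :
    ∃ i : (K → ULift.{u} Bool) → (K → K),
        Continuous[bTop K (ULift.{u} Bool), bTop K K] i ∧
        Function.Injective i ∧ Set.range i ⊆ body K T := by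
  obtain ⟨ι, hιT, hinj, hmon, hcont⟩ := h
  haveI := hr.2.2
  -- total versions
  choose g hg using fun u => exists_xRes (Classical.arbitrary K) (ι u)
  let L : (K → ULift.{u} Bool) → K → K := fun x b => (ι (xRes K x b)).1
  let V : (K → ULift.{u} Bool) → K → K → K := fun x b => g (xRes K x b)
  have hιV : ∀ x b, ι (xRes K x b) = xRes K (V x b) (L x b) := fun x b => hg _
  have hext : ∀ x a b, a ≤ b → L x a ≤ L x b ∧ ∀ i < L x a, V x b i = V x a i := by
    intro x a b hab
    have h1 : NdExt K (xRes K x b) (xRes K x a) := ⟨hab, fun _ => rfl⟩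
    have h2 := hmon _ _ h1
    rw [hιV, hιV] at h2
    obtain ⟨h3, h4⟩ := h2
    exact ⟨h3, fun i hi => h4 ⟨i, hi⟩⟩
  have hstr : ∀ x a b, a < b → L x a < L x b := by
    intro x a b hab
    obtain ⟨h1, h2⟩ := hext x a b hab.le
    refine h1.lt_of_ne fun heq => ?_
    have : ι (xRes K x a) = ι (xRes K x b) := by
      rw [hιV, hιV, heq]
      exact xRes_congr fun i hi => (h2 i (heq ▸ hi)).symm
    exact hab.ne (xRes_inj (hinj this)).1
  have hle : ∀ x b, b ≤ L x b := fun x => le_of_strict (hstr x)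
  choose nx hnx using hr.nomax
  have hnL : ∀ x i, i < L x (nx i) := fun x i => (hnx i).trans_le (hle x _)
  let φ : (K → ULift.{u} Bool) → (K → K) := fun x i => V x (nx i) i
  have hφ : ∀ x b, ∀ i < L x b, φ x i = V x b i := by
    intro x b i hi
    rcases le_total b (nx i) with h | h
    · exact (hext x _ _ h).2 i hi
    · exact ((hext x _ _ h).2 i (hnL x i)).symm
  have hloc : ∀ x y b, (∀ i < b, x i = y i) → L x b = L y b ∧ V x b = V y b := by
    intro x y b h
    have := xRes_congr h
    constructor
    · simp only [L]; rw [this]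
    · simp only [V]; rw [this]
  refine ⟨φ, ?_, ?_, ?_⟩
  · rw [continuous_iff]
    intro x b
    refine ⟨b, fun y hy i hi => ?_⟩
    obtain ⟨h1, h2⟩ := hloc y x b hy
    rw [hφ y b i (hi.trans_le (hle y b)), hφ x b i (hi.trans_le (hle x b)), h2]
  · intro x y hxy
    by_contra hne
    obtain ⟨a, ha⟩ := Function.ne_iff.1 hne
    obtain ⟨δ, hδ, hcl⟩ := hr.close (fun c => max (L x c) (L y c)) a
    have hlim : IsLimElt K δ := ⟨⟨a, hδ⟩, fun c hc => by
      obtain ⟨d, h1, h2, -⟩ := hcl c hc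
      exact ⟨d, h1, h2⟩⟩
    have hLδ : ∀ z, (∀ c, L z c ≤ max (L x c) (L y c)) → L z δ = δ := by
      intro z hz
      refine le_antisymm ?_ (hle z δ)
      by_contra hlt
      push Not at hlt
      obtain ⟨c, hc, h⟩ := hcont (xRes K z δ) hlim δ hlt
      obtain ⟨d, h1, h2, h3⟩ := hcl c hc
      have h4 : δ < L z c := h
      exact absurd (h4.trans (hstr z _ _ h1)) ((hz d).trans_lt h3).not_gt
    have hx := hLδ x fun c => le_max_left _ _
    have hy := hLδ y fun c => le_max_right _ _
    have : ι (xRes K x δ) = ι (xRes K y δ) := by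
      rw [hιV, hιV, hx, hy]
      refine xRes_congr fun i hi => ?_
      rw [← hφ x δ i (hx.symm ▸ hi), ← hφ y δ i (hy.symm ▸ hi), hxy]
    exact ha ((xRes_inj (hinj this)).2 a hδ)
  · rintro _ ⟨x, rfl⟩ b
    have h1 := hιT (xRes K x b)
    rw [hιV] at h1
    have h2 := hT _ h1 b (hle x b)
    have h3 : xRes K (φ x) b = xRes K (V x b) b :=
      xRes_congr fun i hi => hφ x b i (hi.trans_le (hle x b))
    rw [h3]
    exact h2

theorem one_to_two {T : Set (Nd K K)}
    (h : ∃ C ⊆ body K T, IsClosed[bTop K K] C ∧ HomeoToCantor K C) :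
    ∃ i : (K → ULift.{u} Bool) → (K → K),
        Continuous[bTop K (ULift.{u} Bool), bTop K K] i ∧
        Function.Injective i ∧ Set.range i ⊆ body K T := by
  letI := bTop K K
  letI : TopologicalSpace (K → ULift.{u} Bool) := bTop K (ULift.{u} Bool)
  obtain ⟨C, hC, -, ⟨e⟩⟩ := h
  refine ⟨fun x => (e.symm x).1, continuous_subtype_val.comp e.symm.continuous,
    Subtype.val_injective.comp e.symm.injective, ?_⟩
  rintro _ ⟨x, rfl⟩
  exact hC (e.symm x).2

/-- data of a strong embedding without the target tree -/
structure Dat (Φ : (K → ULift.{u} Bool) → (K → K)) (ℓ : (K → ULift.{u} Bool) → K → K) : Prop where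
  loc : ∀ x y b, (∀ i < b, x i = y i) → ℓ x b = ℓ y b ∧ ∀ i < ℓ x b, Φ x i = Φ y i
  str : ∀ x a b, a < b → ℓ x a < ℓ x b
  cont : ∀ x b, IsLimElt K b → ∀ d < ℓ x b, ∃ c < b, d < ℓ x c
  spl : ∀ x y b, (∀ i < b, x i = y i) → x b ≠ y b →
      ∃ γ, (∀ b' > b, γ < ℓ x b' ∧ γ < ℓ y b') ∧ Φ x γ ≠ Φ y γ

variable {Φ : (K → ULift.{u} Bool) → (K → K)} {ℓ : (K → ULift.{u} Bool) → K → K}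

theorem Dat.agree [WellFoundedLT K] (D : Dat Φ ℓ) {x y : K → ULift.{u} Bool} {b b' : K}
    (hb : b ≤ b') (h : ∀ i, i < ℓ x b → i < ℓ y b' → Φ x i = Φ y i) : ∀ i < b, x i = y i := by
  by_contra hne
  obtain ⟨a, ha, hag, hd⟩ := exists_first_diff hne
  obtain ⟨γ, h1, h2⟩ := D.spl x y a hag hd
  exact h2 (h γ (h1 b ha).1 (h1 b' (ha.trans_le hb)).2)

theorem Dat.inj [WellFoundedLT K] (D : Dat Φ ℓ) : Function.Injective Φ := by
  intro x y hxy
  by_contra hne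
  obtain ⟨a, hag, hd⟩ := exists_first_diff' hne
  obtain ⟨γ, h1, h2⟩ := D.spl x y a hag hd
  exact h2 (congrFun hxy γ)

theorem Dat.closed [WellFoundedLT K] (hr : Reg K) (D : Dat Φ ℓ) (z : K → K) (A : Set K)
    (hA : ∀ a ∈ A, ∀ b < a, b ∈ A) (hA' : ∀ a ∈ A, ∃ b ∈ A, a < b)
    (h : ∀ c ∈ A, ∃ y, ∀ i < c, Φ y i = z i) : ∃ x, ∀ i ∈ A, Φ x i = z i := by
  classical
  by_contra hcon
  push Not at hcon
  let R : (K → ULift.{u} Bool) → K → Prop := fun x b => ℓ x b ∈ A ∧ ∀ i < ℓ x b, Φ x i = z i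
  have hRR : ∀ x y b b', b ≤ b' → R x b → R y b' → ∀ i < b, x i = y i := by
    intro x y b b' hb hx hy
    exact D.agree hb fun i h1 h2 => (hx.2 i h1).trans (hy.2 i h2).symm
  let xs : K → ULift.{u} Bool := fun i =>
    if h : ∃ y : K → ULift.{u} Bool, ∃ b, R y b ∧ i < b then h.choose i else ⟨false⟩
  have hxs : ∀ y b, R y b → ∀ i < b, xs i = y i := by
    intro y b hy i hi
    have h : ∃ y : K → ULift.{u} Bool, ∃ b, R y b ∧ i < b := ⟨y, b, hy, hi⟩
    have h1 : xs i = h.choose i := by simp only [xs]; rw [dif_pos h]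
    obtain ⟨b', h2, h3⟩ := h.choose_spec
    rw [h1]
    rcases le_total b b' with hb | hb
    · exact (hRR _ _ _ _ hb hy h2 i hi).symm
    · exact hRR _ _ _ _ hb h2 hy i h3
  have hRxs : ∀ y b, R y b → R xs b := by
    intro y b hy
    obtain ⟨h1, h2⟩ := D.loc xs y b (hxs y b hy)
    refine ⟨h1 ▸ hy.1, fun i hi => ?_⟩
    rw [h2 i hi]
    exact hy.2 i (h1 ▸ hi)
  have hall : ∀ b, R xs b := by
    intro b
    induction b using WellFoundedLT.induction with
    | ind b ih =>
      by_cases hlim : IsLimElt K b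
      · have h1 : ∀ i < ℓ xs b, Φ xs i = z i := by
          intro i hi
          obtain ⟨c, hc, hic⟩ := D.cont xs b hlim i hi
          exact (ih c hc).2 i hic
        refine ⟨?_, h1⟩
        by_contra hnA
        obtain ⟨i, hi, hne⟩ := hcon xs
        refine hne (h1 i ?_)
        by_contra hlt
        push Not at hlt
        rcases hlt.eq_or_lt with h | h
        · exact hnA (h ▸ hi)
        · exact hnA (hA i hi _ h)
      · have hw : ∃ w : K → ULift.{u} Bool, ∀ c ∈ A, ∃ y, (∀ i < c, Φ y i = z i) ∧
            ∀ i < b, y i = w i := by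
          by_cases h0 : ∃ c, c < b
          · have hmax : ∃ a < b, ∀ d, a < d → b ≤ d := by
              by_contra hno
              push Not at hno
              exact hlim ⟨h0, fun c hc => hno c hc⟩
            obtain ⟨a, ha, hmax⟩ := hmax
            by_contra hno
            push Not at hno
            choose c hcA hc using fun j : ULift.{u} Bool => hno (Function.update xs a j)
            have hm : max (max (c ⟨false⟩) (c ⟨true⟩)) (ℓ xs a) ∈ A := by
              rcases max_choice (max (c ⟨false⟩) (c ⟨true⟩)) (ℓ xs a) with h | h <;> rw [h]
              · rcases max_choice (c ⟨false⟩) (c ⟨true⟩) with h | h <;> rw [h]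
                · exact hcA _
                · exact hcA _
              · exact (ih a ha).1
            obtain ⟨y, hy⟩ := h _ hm
            have hya : ∀ i < a, xs i = y i := by
              refine D.agree (b' := a) le_rfl fun i h1 h2 => ?_
              rw [(ih a ha).2 i h1, hy i (lt_max_of_lt_right h1)]
            have hcy : c (y a) ≤ max (max (c ⟨false⟩) (c ⟨true⟩)) (ℓ xs a) := by
              rcases y a with ⟨_ | _⟩
              · exact (le_max_left _ _).trans (le_max_left _ _)
              · exact (le_max_right _ _).trans (le_max_left _ _)
            obtain ⟨i, hi, hne⟩ := hc (y a) y fun i hi => hy i (hi.trans_le hcy)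
            apply hne
            rcases lt_trichotomy i a with h | h | h
            · rw [Function.update_of_ne h.ne, hya i h]
            · rw [h, Function.update_self]
            · exact absurd hi (hmax i h).not_gt
          · refine ⟨xs, fun c hc => ?_⟩
            obtain ⟨y, hy⟩ := h c hc
            exact ⟨y, hy, fun i hi => absurd ⟨i, hi⟩ h0⟩
        obtain ⟨w, hw⟩ := hw
        by_cases hwA : ℓ w b ∈ A
        · obtain ⟨y, hy, hyw⟩ := hw _ hwA
          refine hRxs y b ?_
          obtain ⟨h1, h2⟩ := D.loc y w b hyw
          exact ⟨h1 ▸ hwA, fun i hi => hy i (h1 ▸ hi)⟩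
        · exfalso
          obtain ⟨i, hi, hne⟩ := hcon w
          obtain ⟨c, hc, hic⟩ := hA' i hi
          obtain ⟨y, hy, hyw⟩ := hw c hc
          have hil : i < ℓ w b := by
            by_contra hlt
            push Not at hlt
            rcases hlt.eq_or_lt with h | h
            · exact hwA (h ▸ hi)
            · exact hwA (hA i hi _ h)
          obtain ⟨h1, h2⟩ := D.loc w y b fun i hi => (hyw i hi).symm
          exact hne ((h2 i hil).trans (hy i hic))
  obtain ⟨i, hi, hne⟩ := hcon xs
  obtain ⟨c, hc⟩ := hr.nomax i
  exact hne ((hall c).2 i (hc.trans_le (le_of_strict (D.str xs) c)))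

theorem emb_to_four [WellFoundedLT K] (hr : Reg K) {T : Set (Nd K K)}
    (h : Emb K T) : ∃ S, S ⊆ T ∧ PerfectTree K S := by
  classical
  obtain ⟨Φ, ℓ, h1, h2, h3, h4, hb⟩ := h
  have D : Dat Φ ℓ := ⟨h1, h2, h3, h4⟩
  haveI := hr.2.2
  refine ⟨{p | ∃ x b, p = xRes K (Φ x) b}, ?_, ?_, ?_, ?_, ?_⟩
  · rintro _ ⟨x, b, rfl⟩
    exact hb x b
  · exact ⟨_, fun _ => ⟨false⟩, Classical.arbitrary K, rfl⟩
  · rintro _ ⟨x, b, rfl⟩ c hc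
    exact ⟨x, c, rfl⟩
  · intro p hp hall
    obtain ⟨z, hz⟩ := exists_xRes (Classical.arbitrary K) p
    obtain ⟨b, t⟩ := p
    have ht : t = fun i => z i.1 := eq_of_heq (Sigma.mk.inj hz).2
    clear hz
    subst ht
    obtain ⟨x, hx⟩ := D.closed hr z (Set.Iio b) (fun a ha c hc => hc.trans ha)
      (fun a ha => by
        obtain ⟨d, h1, h2⟩ := hp.2 a ha
        exact ⟨d, h2, h1⟩)
      (fun c hc => by
        obtain ⟨y, b', hy⟩ := hall c hc
        have := xRes_inj (x := z) (b := c) hy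
        exact ⟨y, fun i hi => (this.2 i hi).symm⟩)
    exact ⟨x, b, xRes_congr fun i hi => (hx i hi).symm⟩
  · rintro _ ⟨x, b, rfl⟩
    let y := Function.update x b ⟨!(x b).down⟩
    have hag : ∀ i < b, x i = y i := fun i hi => by simp [y, Function.update_of_ne hi.ne]
    have hne : x ≠ y := by
      intro h
      have := congrFun h b
      simp only [y, Function.update_self] at this
      have := congrArg ULift.down this
      simp at this
    obtain ⟨γ, hγ, hd⟩ := exists_first_diff' (D.inj.ne hne)
    have hbγ : b ≤ γ := by
      by_contra hlt
      push Not at hlt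
      exact hd ((h1 x y b hag).2 γ (hlt.trans_le (le_of_strict (h2 x) b)))
    obtain ⟨c, hc⟩ := hr.nomax γ
    refine ⟨xRes K (Φ x) γ, ⟨x, γ, rfl⟩, ⟨hbγ, fun _ => rfl⟩, Φ x γ,
      ⟨xRes K (Φ x) c, ⟨x, c, rfl⟩, hc, fun _ => rfl, rfl⟩, Φ y γ,
      ⟨xRes K (Φ y) c, ⟨y, c, rfl⟩, hc, fun i => (hγ i.1 i.2).symm, rfl⟩, hd⟩

theorem emb_to_one [WellFoundedLT K] (hr : Reg K) {T : Set (Nd K K)}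
    (h : Emb K T) : ∃ C ⊆ body K T, IsClosed[bTop K K] C ∧ HomeoToCantor K C := by
  obtain ⟨Φ, ℓ, h1, h2, h3, h4, hb⟩ := h
  have D : Dat Φ ℓ := ⟨h1, h2, h3, h4⟩
  haveI := hr.2.2
  have hcont : Continuous[bTop K (ULift.{u} Bool), bTop K K] Φ := by
    rw [continuous_iff]
    intro x b
    refine ⟨b, fun y hy i hi => ?_⟩
    exact (h1 y x b hy).2 i (hi.trans_le (le_of_strict (h2 y) b))
  letI i1 := bTop K K
  letI i2 : TopologicalSpace (K → ULift.{u} Bool) := bTop K (ULift.{u} Bool)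
  refine ⟨Set.range Φ, ?_, ?_, ?_⟩
  · rintro _ ⟨x, rfl⟩
    exact hb x
  · rw [← isOpen_compl_iff]
    refine (isOpen_iff _).2 fun z hz => ?_
    by_contra hcon
    push Not at hcon
    apply hz
    obtain ⟨x, hx⟩ := D.closed hr z Set.univ (fun _ _ _ _ => trivial)
      (fun a _ => by
        obtain ⟨c, hc⟩ := hr.nomax a
        exact ⟨c, trivial, hc⟩)
      (fun c _ => by
        obtain ⟨y, hy, hy'⟩ := hcon c
        rw [Set.mem_compl_iff, not_not] at hy'
        obtain ⟨w, rfl⟩ := hy'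
        exact ⟨w, hy⟩)
    exact ⟨x, funext fun i => hx i trivial⟩
  · have hind : Topology.IsInducing Φ := by
      refine ⟨le_antisymm hcont.le_induced ?_⟩
      intro U hU
      have hU := (isOpen_iff _).1 hU
      choose! b hb using hU
      refine isOpen_induced_iff.2
        ⟨⋃ x ∈ U, {z | ∀ i, i < ℓ x (b x) → z i = Φ x i}, ?_, ?_⟩
      · exact isOpen_biUnion fun x _ =>
          TopologicalSpace.isOpen_generateFrom_of_mem ⟨_, Φ x, rfl⟩
      · ext y
        simp only [mem_preimage, mem_iUnion, mem_setOf_eq]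
        constructor
        · rintro ⟨x, hx, hxy⟩
          refine hb x hx y fun i hi => ?_
          exact (D.agree (b' := b x) le_rfl (fun i h _ => (hxy i h).symm) i hi).symm
        · intro hy
          exact ⟨y, hy, fun _ _ => rfl⟩
    exact ⟨(Topology.IsEmbedding.toHomeomorph ⟨hind, D.inj⟩).symm⟩

theorem emb_to_three [WellFoundedLT K] {T : Set (Nd K K)}
    (h : Emb K T) : ∃ ι : Nd K (ULift.{u} Bool) → Nd K K, (∀ u, ι u ∈ T) ∧
        Function.Injective ι ∧
        (∀ u u' : Nd K (ULift.{u} Bool), NdExt K u' u → NdExt K (ι u') (ι u)) ∧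
        (∀ u : Nd K (ULift.{u} Bool), IsLimElt K u.1 → ∀ d, d < (ι u).1 →
          ∃ c, ∃ h : c < u.1, d < (ι (ndRes K u c h.le)).1) := by
  obtain ⟨Φ, ℓ, h1, h2, h3, h4, hb⟩ := h
  have D : Dat Φ ℓ := ⟨h1, h2, h3, h4⟩
  choose g hg using fun u => exists_xRes (K := K) (Y := ULift.{u} Bool) ⟨false⟩ u
  let ι : Nd K (ULift.{u} Bool) → Nd K K := fun u => xRes K (Φ (g u)) (ℓ (g u) u.1)
  have hι : ∀ x b, ι (xRes K x b) = xRes K (Φ x) (ℓ x b) := by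
    intro x b
    have hag := (xRes_inj (hg (xRes K x b))).2
    obtain ⟨e1, e2⟩ := h1 x (g (xRes K x b)) b hag
    have e3 : ι (xRes K x b) = xRes K (Φ (g (xRes K x b))) (ℓ (g (xRes K x b)) b) := rfl
    rw [e3, ← e1]
    exact xRes_congr fun i hi => (e2 i hi).symm
  refine ⟨ι, fun u => hb _ _, ?_, ?_, ?_⟩
  · have key : ∀ x y b b', b ≤ b' → ι (xRes K x b) = ι (xRes K y b') →
        xRes K x b = xRes K y b' := by
      intro x y b b' hbb h
      rw [hι, hι] at h
      obtain ⟨e1, e2⟩ := xRes_inj h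
      have hag := D.agree hbb fun i hi _ => e2 i hi
      have e3 := (h1 x y b hag).1
      rcases hbb.eq_or_lt with rfl | hlt
      · exact xRes_congr hag
      · exact absurd (e3.symm.trans e1) (h2 y _ _ hlt).ne
    intro u u' h
    rw [hg u, hg u'] at h ⊢
    rcases le_total u.1 u'.1 with hle | hle
    · exact key _ _ _ _ hle h
    · exact (key _ _ _ _ hle h.symm).symm
  · rintro u u' h
    rw [hg u, hg u'] at h ⊢
    obtain ⟨h5, h6⟩ := h
    rw [hι, hι]
    have hag : ∀ i < u.1, g u i = g u' i := fun i hi => (h6 ⟨i, hi⟩).symm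
    obtain ⟨e1, e2⟩ := h1 _ _ _ hag
    refine ⟨?_, fun i => (e2 i.1 i.2).symm⟩
    change ℓ (g u) u.1 ≤ ℓ (g u') u'.1
    rw [e1]
    have h5 : u.1 ≤ u'.1 := h5
    rcases h5.eq_or_lt with h | h
    · rw [h]
    · exact (h2 _ _ _ h).le
  · intro u hu d hd
    obtain ⟨c, hc, hdc⟩ := h3 (g u) u.1 hu d hd
    refine ⟨c, hc, ?_⟩
    have : ndRes K u c hc.le = xRes K (g u) c := by
      have e : ∀ p q : Nd K (ULift.{u} Bool), p = q → ∀ h : c ≤ p.1, ∀ h' : c ≤ q.1,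
        ndRes K p c h = ndRes K q c h' := by
        rintro p _ rfl _ _; rfl
      exact e _ _ (hg u) hc.le hc.le
    rw [this, hι]
    exact hdc

end PCT

/-- For a subtree `T ⊆ K^{<K}` the following are equivalent: (1) `[T]`
contains a closed copy of the Cantor space `K → 2`; (2) there is a continuous
injection of `K → 2` into `[T]`; (3) there is an inclusion-preserving continuous
injection of `2^{<K}` into `T`; (4) `T` contains a perfect subtree. -/
theorem perfect_closed_tree_embedding_equivalences (K : Type u) [LinearOrder K] [WellFoundedLT K]
    (hseg : ∀ b : K, #(Set.Iio b) < #K)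
    (hunc : ℵ₀ < #K) (hpow : Cardinal.powerlt #K #K = #K)
    (T : Set (Nd K K)) (hT : IsSubtree K T) :
    ((∃ C ⊆ body K T, IsClosed[bTop K K] C ∧ HomeoToCantor K C) ↔
      (∃ i : (K → ULift.{u} Bool) → (K → K),
        Continuous[bTop K (ULift.{u} Bool), bTop K K] i ∧
        Function.Injective i ∧ Set.range i ⊆ body K T)) ∧
    ((∃ i : (K → ULift.{u} Bool) → (K → K),
        Continuous[bTop K (ULift.{u} Bool), bTop K K] i ∧
        Function.Injective i ∧ Set.range i ⊆ body K T) ↔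
      (∃ ι : Nd K (ULift.{u} Bool) → Nd K K, (∀ u, ι u ∈ T) ∧
        Function.Injective ι ∧
        (∀ u u' : Nd K (ULift.{u} Bool), NdExt K u' u → NdExt K (ι u') (ι u)) ∧
        (∀ u : Nd K (ULift.{u} Bool), IsLimElt K u.1 → ∀ d, d < (ι u).1 →
          ∃ c, ∃ h : c < u.1, d < (ι (ndRes K u c h.le)).1))) ∧
    ((∃ ι : Nd K (ULift.{u} Bool) → Nd K K, (∀ u, ι u ∈ T) ∧
        Function.Injective ι ∧
        (∀ u u' : Nd K (ULift.{u} Bool), NdExt K u' u → NdExt K (ι u') (ι u)) ∧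
        (∀ u : Nd K (ULift.{u} Bool), IsLimElt K u.1 → ∀ d, d < (ι u).1 →
          ∃ c, ∃ h : c < u.1, d < (ι (ndRes K u c h.le)).1)) ↔
      (∃ S, S ⊆ T ∧ PerfectTree K S)) := by
  have hr := PCT.reg hseg hunc hpow
  have h25 := PCT.two_to_emb hr hT
  have h45 := PCT.four_to_emb hr hT
  have h32 := PCT.three_to_two hr hT
  refine ⟨⟨PCT.one_to_two, fun h => PCT.emb_to_one hr (h25 h)⟩,
    ⟨fun h => PCT.emb_to_three (h25 h), h32⟩,
    ⟨fun h => PCT.emb_to_four hr (h25 (h32 h)), fun h => PCT.emb_to_three (h45 h)⟩⟩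
end

section
/- Let κ be a weakly compact cardinal. A subset A of κ^κ satisfies the Hurewicz dichotomy if and only if it satisfies the Miller-tree Hurewicz dichotomy. -/
open Cardinal Set Topology

universe u

/-! ### Superperfect maps -/

/-- A map `Φ` of the Baire space to itself with splitting levels `γ` and splitting values `v`. -/
structure SPMap (K : Type u) [LinearOrder K] (Φ : (K → K) → (K → K)) (γ : (K → K) → K → K)
    (v : (K → K) → K → K → K) : Prop where
  inj : ∀ f b, Function.Injective (v f b)
  congG : ∀ f g b, (∀ i, i < b → f i = g i) → γ f b = γ g b
  congV : ∀ f g b, (∀ i, i < b → f i = g i) → v f b = v g b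
  agree : ∀ f g b, (∀ i, i < b → f i = g i) → ∀ i, i < γ f b → Φ f i = Φ g i
  val : ∀ f b, Φ f (γ f b) = v f b (f b)

theorem hz_bounded (K : Type u) [LinearOrder K] (hseg : ∀ b : K, #(Set.Iio b) < #K)
    (hin : (#K).IsInaccessible) {ι : Type u} (hι : #ι < #K) (g : ι → K) :
    ∃ m, ∀ i, g i < m := by
  by_contra hcon
  push Not at hcon
  have h1 : (⋃ i, Set.Iic (g i)) = Set.univ := by
    ext m; simpa using hcon m
  have hic : ∀ b : K, #(Set.Iic b) < #K := by
    intro b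
    rw [← Set.Iio_insert]
    refine lt_of_le_of_lt Cardinal.mk_insert_le ?_
    exact Cardinal.add_lt_of_lt hin.isRegular.aleph0_le (hseg b)
      (lt_of_lt_of_le Cardinal.one_lt_aleph0 hin.isRegular.aleph0_le)
  have h2 : #(⋃ i, Set.Iic (g i) : Set K) < #K :=
    (Cardinal.card_iUnion_lt_iff_forall_of_isRegular hin.isRegular hι).2 (fun i => hic _)
  rw [h1, Cardinal.mk_univ] at h2
  exact lt_irrefl _ h2

theorem hz_noMax (K : Type u) [LinearOrder K] (hseg : ∀ b : K, #(Set.Iio b) < #K)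
    (hin : (#K).IsInaccessible) : NoMaxOrder K := by
  refine ⟨fun a => ?_⟩
  obtain ⟨m, hm⟩ := hz_bounded K hseg hin (ι := PUnit.{u+1})
    (by simpa using lt_of_lt_of_le Cardinal.one_lt_aleph0 hin.isRegular.aleph0_le) (fun _ => a)
  exact ⟨m, hm ⟨⟩⟩

theorem hz_isOpen_iff (K : Type u) [LinearOrder K] [Nonempty K] (U : Set (K → K)) :
    IsOpen[bTop K K] U ↔ ∀ x ∈ U, ∃ b, ∀ y : K → K, (∀ i, i < b → y i = x i) → y ∈ U := by
  constructor
  · intro h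
    induction h with
    | basic s hs =>
      obtain ⟨b, t, rfl⟩ := hs
      intro x hx
      exact ⟨b, fun y hy i hi => (hy i hi).trans (hx i hi)⟩
    | univ => intro x _; exact ⟨Classical.arbitrary K, fun _ _ => trivial⟩
    | inter s t _ _ ih1 ih2 =>
      intro x hx
      obtain ⟨b, hb⟩ := ih1 x hx.1
      obtain ⟨c, hc⟩ := ih2 x hx.2
      exact ⟨max b c, fun y hy => ⟨hb y fun i hi => hy i (lt_of_lt_of_le hi (le_max_left _ _)),
        hc y fun i hi => hy i (lt_of_lt_of_le hi (le_max_right _ _))⟩⟩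
    | sUnion S _ ih =>
      intro x ⟨s, hs, hx⟩
      obtain ⟨b, hb⟩ := ih s hs x hx
      exact ⟨b, fun y hy => ⟨s, hs, hb y hy⟩⟩
  · intro h
    letI := bTop K K
    rw [show U = ⋃₀ {V | IsOpen V ∧ V ⊆ U} from ?_]
    · exact isOpen_sUnion fun V hV => hV.1
    · ext x
      constructor
      · intro hx
        obtain ⟨b, hb⟩ := h x hx
        exact ⟨{y | ∀ i, i < b → y i = x i},
          ⟨TopologicalSpace.GenerateOpen.basic _ ⟨b, x, rfl⟩, fun y hy => hb y hy⟩,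
          fun i _ => rfl⟩
      · rintro ⟨V, hV, hx⟩
        exact hV.2 hx

namespace SPMap

variable {K : Type u} [LinearOrder K] [WellFoundedLT K] {Φ : (K → K) → (K → K)}
  {γ : (K → K) → K → K} {v : (K → K) → K → K → K}

theorem strictMono [NoMaxOrder K] (H : SPMap K Φ γ v) (f : K → K) : StrictMono (γ f) := by
  intro c b hcb
  by_contra hle
  push Not at hle
  classical
  obtain ⟨a, ha⟩ := exists_gt (f b)
  set g := Function.update f b a with hg
  have hfg : ∀ i, i < b → f i = g i := fun i hi => by
    rw [hg, Function.update_of_ne hi.ne]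
  have hne : Φ f (γ f b) ≠ Φ g (γ f b) := by
    rw [H.val f b, H.congG f g b hfg, H.val g b, H.congV f g b hfg]
    intro h
    have := H.inj g b h
    rw [hg, Function.update_self] at this
    exact ha.ne this
  have hfgc : ∀ i, i < c → f i = g i := fun i hi => hfg i (hi.trans hcb)
  rcases hle.lt_or_eq with h | h
  · exact hne (H.agree f g c hfgc _ h)
  · apply hne
    rw [h, H.val f c, H.congG f g c hfgc, H.val g c, H.congV f g c hfgc, hfg c hcb]

/-- Agreement of the images forces agreement of the preimages. -/
theorem lift_agree [NoMaxOrder K] (H : SPMap K Φ γ v) (f g x : K → K) (c : K)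
    (hf : ∀ d, (∃ a, v f d a = x (γ f d)) → v f d (f d) = x (γ f d))
    (hg : ∀ i, i < c → Φ g i = x i) : ∀ d, γ g d < c → g d = f d := by
  intro d
  induction d using WellFoundedLT.induction with
  | ind d ih =>
    intro hd
    have hfg : ∀ i, i < d → g i = f i := fun i hi => ih i hi ((H.strictMono g hi).trans hd)
    have h1 := hg _ hd
    rw [H.val, H.congV g f d hfg, H.congG g f d hfg] at h1
    exact H.inj f d (h1.trans (hf d ⟨_, h1⟩).symm)

theorem exists_trace (H : SPMap K Φ γ v) (x : K → K) :
    ∃ f : K → K, ∀ d, (∃ a, v f d a = x (γ f d)) → v f d (f d) = x (γ f d) := by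
  classical
  let F : (d : K) → ((c : K) → c < d → K) → K := fun d r =>
    let f' : K → K := fun c => if h : c < d then r c h else d
    if h : ∃ a, v f' d a = x (γ f' d) then h.choose else d
  let f : K → K := (wellFounded_lt (α := K)).fix F
  refine ⟨f, fun d hd => ?_⟩
  have hfix : f d = F d (fun c _ => f c) := WellFounded.fix_eq _ _ _
  set f' : K → K := fun c => if h : c < d then f c else d with hf'
  have hff : ∀ i, i < d → f i = f' i := fun i hi => by simp [hf', hi]
  have hv := H.congV f f' d hff
  have hG := H.congG f f' d hff
  rw [hv, hG] at hd ⊢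
  have : f d = hd.choose := by
    rw [hfix]
    exact dif_pos hd
  rw [this]
  exact hd.choose_spec

theorem exists_lift [NoMaxOrder K] (H : SPMap K Φ γ v) (x : K → K) (I : Set K)
    (hx : ∀ i ∈ I, ∃ c, i < c ∧ ∃ g, ∀ j, j < c → Φ g j = x j) :
    ∃ f, ∀ i ∈ I, Φ f i = x i := by
  obtain ⟨f, hf⟩ := H.exists_trace x
  refine ⟨f, fun i hi => ?_⟩
  obtain ⟨c, hic, g, hg⟩ := hx i hi
  have hex : ∃ d, c ≤ γ g d := ⟨c, (H.strictMono g).le_apply⟩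
  obtain ⟨d, hd, hmin⟩ := (wellFounded_lt (α := K)).has_min {d | c ≤ γ g d} hex
  have hfg : ∀ e, e < d → g e = f e := fun e he =>
    H.lift_agree f g x c hf hg e (lt_of_not_ge fun h => hmin e h he)
  rw [← H.agree g f d hfg i (lt_of_lt_of_le hic hd), hg i hic]

theorem agree_of_image [NoMaxOrder K] (H : SPMap K Φ γ v) (f g : K → K) (c : K)
    (hg : ∀ i, i < c → Φ g i = Φ f i) : ∀ d, γ g d < c → g d = f d :=
  H.lift_agree f g (Φ f) c (fun d _ => (H.val f d).symm) hg

theorem isClosed_range [NoMaxOrder K] [Nonempty K] (H : SPMap K Φ γ v) :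
    IsClosed[bTop K K] (Set.range Φ) := by
  letI := bTop K K
  rw [← isOpen_compl_iff, hz_isOpen_iff]
  intro x hx
  by_contra hcon
  push Not at hcon
  apply hx
  obtain ⟨f, hf⟩ := H.exists_lift x Set.univ (fun i _ => by
    obtain ⟨c, hc⟩ := exists_gt i
    obtain ⟨y, hy, hyr⟩ := hcon c
    rw [Set.notMem_compl_iff] at hyr
    obtain ⟨g, rfl⟩ := hyr
    exact ⟨c, hc, g, hy⟩)
  exact ⟨f, funext fun i => hf i trivial⟩

theorem homeo [NoMaxOrder K] [Nonempty K] (H : SPMap K Φ γ v) :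
    HomeoToBaire K (Set.range Φ) := by
  letI := bTop K K
  have hinj : Function.Injective Φ := by
    intro g f hgf
    funext d
    obtain ⟨c, hc⟩ := exists_gt (γ g d)
    exact H.agree_of_image f g c (fun i _ => by rw [hgf]) d hc
  have hemb : IsEmbedding Φ := by
    refine ⟨⟨?_⟩, hinj⟩
    apply TopologicalSpace.ext_iff.2
    intro U
    rw [isOpen_induced_iff]
    constructor
    · intro hU
      have hU' := (hz_isOpen_iff K U).1 hU
      refine ⟨{y | ∃ f ∈ U, ∃ c, (∀ g, (∀ i, i < c → Φ g i = Φ f i) → g ∈ U) ∧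
        ∀ i, i < c → y i = Φ f i}, ?_, ?_⟩
      · rw [hz_isOpen_iff]
        rintro y ⟨f, hf, c, hc, hy⟩
        exact ⟨c, fun z hz => ⟨f, hf, c, hc, fun i hi => (hz i hi).trans (hy i hi)⟩⟩
      · ext g
        constructor
        · rintro ⟨f, hf, c, hc, hy⟩
          exact hc g hy
        · intro hg
          obtain ⟨b, hb⟩ := hU' g hg
          refine ⟨g, hg, γ g b, fun k hk => hb k fun i hi => ?_, fun i _ => rfl⟩
          exact (H.agree_of_image k g (γ g b) (fun i hi => (hk i hi).symm) i
            (H.strictMono g hi)).symm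
    · rintro ⟨V, hV, rfl⟩
      have hV' := (hz_isOpen_iff K V).1 hV
      rw [hz_isOpen_iff]
      intro f hf
      obtain ⟨b, hb⟩ := hV' _ hf
      refine ⟨b, fun g hg => hb _ fun i hi => ?_⟩
      exact (H.agree f g b (fun i hi => (hg i hi).symm) i
        (lt_of_lt_of_le hi (H.strictMono f).le_apply)).symm
  exact ⟨hemb.toHomeomorph.symm⟩

theorem miller [NoMaxOrder K] [Nonempty K] (H : SPMap K Φ γ v) (C : Set (K → K))
    (hC : IsClosed[bTop K K] C) (hsub : ∀ f, Φ f ∈ C) :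
    ∃ T, MillerTree K T ∧ body K T ⊆ C := by
  classical
  refine ⟨{p | ∃ f, xRes K (Φ f) p.1 = p}, ⟨?_, ?_, ?_, ?_⟩, ?_⟩
  · exact ⟨xRes K (Φ id) (Classical.arbitrary K), id, rfl⟩
  · rintro ⟨b, p⟩ ⟨f, hf⟩ c h
    refine ⟨f, ?_⟩
    have h2 : (fun i : Set.Iio b => Φ f i.1) = p := eq_of_heq (Sigma.mk.inj hf).2
    clear hf
    subst h2
    rfl
  · rintro ⟨b, p⟩ hlim hp
    let x : K → K := fun i => if h : i < b then p ⟨i, h⟩ else i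
    obtain ⟨f, hf⟩ := H.exists_lift x (Set.Iio b) (fun i hi => by
      obtain ⟨c, hic, hcb⟩ := hlim.2 i hi
      obtain ⟨g, hg⟩ := hp c hcb
      refine ⟨c, hic, g, fun j hj => ?_⟩
      have h2 := congrFun (eq_of_heq (Sigma.mk.inj hg).2) ⟨j, hj⟩
      have h3 : x j = p ⟨j, hj.trans hcb⟩ := dif_pos _
      rw [h3]
      exact h2)
    refine ⟨f, ?_⟩
    show (⟨b, fun i => Φ f i.1⟩ : Nd K K) = ⟨b, p⟩
    congr 1
    funext i
    rw [hf i.1 i.2]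
    exact dif_pos i.2
  · rintro p ⟨f, hf⟩
    refine ⟨xRes K (Φ f) (γ f p.1), ⟨f, rfl⟩, ?_, ?_⟩
    · refine ⟨(H.strictMono f).le_apply, fun i => ?_⟩
      obtain ⟨b, p⟩ := p
      exact congrFun (eq_of_heq (Sigma.mk.inj hf).2) i
    · have hr : Set.range (v f p.1) ⊆ splitVals K {p | ∃ f, xRes K (Φ f) p.1 = p}
          (xRes K (Φ f) (γ f p.1)) := by
        rintro _ ⟨a, rfl⟩
        obtain ⟨c, hc⟩ := exists_gt (γ f p.1)
        set g := Function.update f p.1 a with hg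
        have hfg : ∀ i, i < p.1 → f i = g i := fun i hi => by
          rw [hg, Function.update_of_ne hi.ne]
        refine ⟨xRes K (Φ g) c, ⟨g, rfl⟩, hc, fun i => ?_, ?_⟩
        · exact (H.agree f g p.1 hfg i.1 i.2).symm
        · show Φ g (γ f p.1) = _
          rw [H.congG f g p.1 hfg, H.val, ← H.congV f g p.1 hfg, hg, Function.update_self]
      calc #K = #(Set.range (v f p.1)) := (Cardinal.mk_range_eq _ (H.inj f p.1)).symm
        _ ≤ _ := Cardinal.mk_le_mk_of_subset hr
  · intro x hx
    by_contra hxC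
    letI := bTop K K
    obtain ⟨b, hb⟩ := (hz_isOpen_iff K Cᶜ).1 hC.isOpen_compl x hxC
    obtain ⟨f, hf⟩ := hx b
    refine hb (Φ f) (fun i hi => ?_) (hsub f)
    exact congrFun (eq_of_heq (Sigma.mk.inj hf).2) ⟨i, hi⟩

end SPMap

/-! ### Fusion -/

theorem hz_fusion (K : Type u) [LinearOrder K] [WellFoundedLT K] [Nonempty K]
    (hbd : ∀ b : K, ∀ g : Set.Iio b → K, ∃ m, ∀ i, g i < m)
    (h : (K → K) → (K → K)) (R : K → (K → K) → Prop)
    (hcong : ∀ l s s', (∀ i, i < l → s i = s' i) → R l s → R l s')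
    (hsubt : ∀ l s c, c ≤ l → R l s → R c s)
    (hsup : ∀ l s, (∀ i, i < l → ∃ c, i < c ∧ c ≤ l ∧ R c s) → R l s)
    (hstep : ∀ l s, R l s → ∃ (γ : K) (v : K → K) (L : K → K) (t : K → K → K) (q : K → K),
      Function.Injective v ∧ ∀ a, l < L a ∧ R (L a) (t a) ∧ (∀ i, i < l → t a i = s i) ∧
        ∀ x : K → K, (∀ c, R c x) → (∀ i, i < L a → x i = t a i) →
          h x γ = v a ∧ ∀ i, i < γ → h x i = q i) :
    ∃ Φ γ v, SPMap K Φ γ v ∧ ∀ f, ∃ x, (∀ c, R c x) ∧ Φ f = h x := by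
  classical
  have hstep' : ∀ p : K × (K → K), ∃ (γ : K) (v : K → K) (L : K → K) (t : K → K → K) (q : K → K),
      R p.1 p.2 → 
      Function.Injective v ∧ ∀ a, p.1 < L a ∧ R (L a) (t a) ∧ (∀ i, i < p.1 → t a i = p.2 i) ∧
        ∀ x : K → K, (∀ c, R c x) → (∀ i, i < L a → x i = t a i) →
          h x γ = v a ∧ ∀ i, i < γ → h x i = q i := by
    intro p
    by_cases hp : R p.1 p.2
    · obtain ⟨γ, v, L, t, q, hh⟩ := hstep p.1 p.2 hp
      exact ⟨γ, v, L, t, q, fun _ => hh⟩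
    · exact ⟨p.1, id, id, fun _ => id, id, fun h => absurd h hp⟩
  choose Γ V L t q hS using hstep'
  have hlub : ∀ b : K, ∀ g : (c : K) → c < b → K, ∃ m, (∀ c hc, g c hc ≤ m) ∧
      ∀ i, i < m → ∃ c hc, i < g c hc := by
    intro b g
    obtain ⟨m0, hm0⟩ := hbd b (fun c => g c.1 c.2)
    obtain ⟨m, hm, hmin⟩ := (wellFounded_lt (α := K)).has_min {m | ∀ c hc, g c hc ≤ m}
      ⟨m0, fun c hc => (hm0 ⟨c, hc⟩).le⟩
    refine ⟨m, hm, fun i hi => ?_⟩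
    by_contra hcon
    push Not at hcon
    exact hmin i hcon hi
  choose S hS1 hS2 using hlub
  let F : (K → K) → (b : K) → ((c : K) → c < b → K × (K → K)) → K × (K → K) := fun f b r =>
    (S b (fun c hc => L (r c hc) (f c)), fun i =>
      if hh : ∃ c, ∃ hc : c < b, i < L (r c hc) (f c) then
        t (r hh.choose hh.choose_spec.choose) (f hh.choose) i else b)
  let E : (K → K) → K → K × (K → K) := fun f => (wellFounded_lt (α := K)).fix (F f)
  have hE : ∀ f b, E f b = F f b (fun c _ => E f c) := fun f b => WellFounded.fix_eq _ _ _
  have hEcong : ∀ f g b, (∀ i, i < b → f i = g i) → E f b = E g b := by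
    intro f g b
    induction b using WellFoundedLT.induction with
    | ind b ih =>
      intro hfg
      have h1 : ∀ c, c < b → E f c = E g c := fun c hc => ih c hc fun i hi => hfg i (hi.trans hc)
      rw [hE f b, hE g b]
      have h2 : (fun c (hc : c < b) => L (E f c) (f c)) = fun c (hc : c < b) => L (E g c) (g c) := by
        funext c hc
        rw [h1 c hc, hfg c hc]
      have h3 : (fun c (hc : c < b) => t (E f c) (f c)) = fun c (hc : c < b) => t (E g c) (g c) := by
        funext c hc
        rw [h1 c hc, hfg c hc]
      have key : ∀ (f : K → K), F f b (fun c _ => E f c) =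
          (fun (LL : (c : K) → c < b → K) (tt : (c : K) → c < b → K → K) =>
            ((S b LL, fun i => if hh : ∃ c, ∃ hc : c < b, i < LL c hc then
              tt hh.choose hh.choose_spec.choose i else b) : K × (K → K)))
            (fun c (hc : c < b) => L (E f c) (f c)) (fun c (hc : c < b) => t (E f c) (f c)) :=
        fun f => rfl
      rw [key f, key g, h2, h3]
  have hmain : ∀ f b, R (E f b).1 (E f b).2 ∧ ∀ c, c < b → L (E f c) (f c) ≤ (E f b).1 ∧
      ∀ i, i < L (E f c) (f c) → (E f b).2 i = t (E f c) (f c) i := by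
    intro f b
    induction b using WellFoundedLT.induction with
    | ind b ih =>
      have hco : ∀ c c', c < c' → c' < b → ∀ i, i < L (E f c) (f c) →
          t (E f c') (f c') i = t (E f c) (f c) i := by
        intro c c' hcc hcb i hi
        obtain ⟨hR, hl⟩ := ih c' hcb
        obtain ⟨hl1, hl2⟩ := hl c hcc
        rw [← hl2 i hi]
        exact ((hS _ hR).2 (f c')).2.2.1 i (lt_of_lt_of_le hi hl1)
      have hA : ∀ c, c < b → L (E f c) (f c) ≤ (E f b).1 ∧
          ∀ i, i < L (E f c) (f c) → (E f b).2 i = t (E f c) (f c) i := by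
        intro c hc
        constructor
        · rw [hE f b]
          exact hS1 b (fun c _ => L (E f c) (f c)) c hc
        · intro i hi
          have hh : ∃ c, ∃ hc : c < b, i < L (E f c) (f c) := ⟨c, hc, hi⟩
          have : (E f b).2 i = t (E f hh.choose) (f hh.choose) i := by
            rw [hE f b]
            exact dif_pos hh
          rw [this]
          obtain ⟨hc', hi'⟩ := hh.choose_spec
          rcases lt_trichotomy c hh.choose with h1 | h1 | h1
          · exact hco _ _ h1 hc' i hi
          · rw [← h1]
          · exact (hco _ _ h1 hc i hi').symm
      refine ⟨hsup _ _ fun i hi => ?_, hA⟩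
      have : ∃ c, ∃ _ : c < b, i < L (E f c) (f c) := by
        apply hS2 b (fun c _ => L (E f c) (f c)) i
        rw [hE f b] at hi
        exact hi
      obtain ⟨c, hc, hic⟩ := this
      exact ⟨_, hic, (hA c hc).1, hcong _ _ _ (fun j hj => ((hA c hc).2 j hj).symm)
        ((hS _ (ih c hc).1).2 (f c)).2.1⟩
  have hmono : ∀ f, StrictMono (fun b => (E f b).1) := fun f c b hcb =>
    lt_of_lt_of_le ((hS _ (hmain f c).1).2 (f c)).1 ((hmain f b).2 c hcb).1
  have hlt : ∀ f b, b < L (E f b) (f b) := fun f b =>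
    lt_of_le_of_lt (hmono f).le_apply ((hS _ (hmain f b).1).2 (f b)).1
  have hco : ∀ f c c', c < c' → ∀ i, i < L (E f c) (f c) →
      t (E f c') (f c') i = t (E f c) (f c) i := by
    intro f c c' hcc i hi
    obtain ⟨hR, hl⟩ := hmain f c'
    obtain ⟨hl1, hl2⟩ := hl c hcc
    rw [← hl2 i hi]
    exact ((hS _ hR).2 (f c')).2.2.1 i (lt_of_lt_of_le hi hl1)
  let X : (K → K) → K → K := fun f i => t (E f i) (f i) i
  have hX : ∀ f c i, i < L (E f c) (f c) → X f i = t (E f c) (f c) i := by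
    intro f c i hi
    rcases lt_trichotomy c i with h1 | h1 | h1
    · exact hco f c i h1 i hi
    · rw [h1]
    · exact (hco f i c h1 i (hlt f i)).symm
  have hXR : ∀ f c, R c (X f) := by
    intro f c
    refine hsubt _ _ c (hlt f c).le (hcong _ _ _ (fun i hi => (hX f c i hi).symm)
      ((hS _ (hmain f c).1).2 (f c)).2.1)
  have hfin : ∀ f b, h (X f) (Γ (E f b)) = V (E f b) (f b) ∧
      ∀ i, i < Γ (E f b) → h (X f) i = q (E f b) i := fun f b =>
    ((hS _ (hmain f b).1).2 (f b)).2.2.2 (X f) (hXR f) (hX f b)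
  refine ⟨fun f => h (X f), fun f b => Γ (E f b), fun f b => V (E f b), ⟨?_, ?_, ?_, ?_, ?_⟩,
    fun f => ⟨X f, hXR f, rfl⟩⟩
  · exact fun f b => (hS _ (hmain f b).1).1
  · intro f g b hfg
    simp only [hEcong f g b hfg]
  · intro f g b hfg
    simp only [hEcong f g b hfg]
  · intro f g b hfg i hi
    have hi' := hi
    simp only [hEcong f g b hfg] at hi'
    show h (X f) i = h (X g) i
    rw [(hfin f b).2 i hi, (hfin g b).2 i hi', hEcong f g b hfg]
  · exact fun f b => (hfin f b).1

/-! ### From Miller trees to superperfect maps -/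

theorem hz_of_miller (K : Type u) [LinearOrder K] [WellFoundedLT K] [Nonempty K]
    (hbd : ∀ b : K, ∀ g : Set.Iio b → K, ∃ m, ∀ i, g i < m)
    (T : Set (Nd K K)) (hT : MillerTree K T) :
    ∃ Φ γ v, SPMap K Φ γ v ∧ ∀ f, Φ f ∈ body K T := by
  classical
  obtain ⟨⟨p0, hp0⟩, hsub, hsc, hsplit⟩ := hT
  have hcong : ∀ l (s s' : K → K), (∀ i, i < l → s i = s' i) → xRes K s l = xRes K s' l := by
    intro l s s' hh
    unfold xRes
    congr 1
    funext i
    exact hh i.1 i.2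
  obtain ⟨Φ, γ, v, H, hΦ⟩ := hz_fusion K hbd id (fun l s => xRes K s l ∈ T)
    (fun l s s' hh hR => by rwa [← hcong l s s' hh])
    (fun l s c hc hR => hsub _ hR c hc)
    (by
      intro l s hl
      by_cases hlim : IsLimElt K l
      · refine hsc _ hlim fun c hc => ?_
        obtain ⟨d, hcd, hdl, hd⟩ := hl c hc
        exact hsub _ hd c hcd.le
      · by_cases hz : ∃ c, c < l
        · have : ∃ c, c < l ∧ ∀ d, c < d → l ≤ d := by
            by_contra hcon
            push Not at hcon
            exact hlim ⟨hz, hcon⟩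
          obtain ⟨c, hc, hcl⟩ := this
          obtain ⟨d, hcd, hdl, hd⟩ := hl c hc
          rwa [← le_antisymm hdl (hcl d hcd)]
        · push Not at hz
          have h1 := hsub p0 hp0 l (hz _)
          convert h1 using 1
          unfold xRes ndRes
          congr 1
          funext i
          exact absurd i.2 (not_lt.2 (hz i.1)))
    (by
      intro l s hR
      obtain ⟨qn, hq, ⟨hle, hext⟩, hcard⟩ := hsplit _ hR
      obtain ⟨e⟩ := (Cardinal.le_def _ _).1 hcard
      have hw := fun a : K => (e a).2
      choose r hr hlen hagr hval using hw
      have htt : ∃ tt : K → K → K, ∀ a i (hi : i < (r a).1), tt a i = (r a).2 ⟨i, hi⟩ :=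
        ⟨fun a i => if hh : i < (r a).1 then (r a).2 ⟨i, hh⟩ else i, fun a i hi => dif_pos hi⟩
      obtain ⟨tt, htt⟩ := htt
      have hqq : ∃ qq : K → K, ∀ i (hi : i < qn.1), qq i = qn.2 ⟨i, hi⟩ :=
        ⟨fun i => if hh : i < qn.1 then qn.2 ⟨i, hh⟩ else i, fun i hi => dif_pos hi⟩
      obtain ⟨qq, hqq⟩ := hqq
      refine ⟨qn.1, fun a => (e a).1, fun a => (r a).1, tt, qq, ?_, fun a => ⟨?_, ?_, ?_, ?_⟩⟩
      · exact fun a b hab => e.injective (Subtype.ext hab)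
      · exact lt_of_le_of_lt hle (hlen a)
      · convert hr a using 1
        show (⟨(r a).1, _⟩ : Nd K K) = ⟨(r a).1, (r a).2⟩
        congr 1
        funext i
        exact htt a i.1 i.2
      · intro i hi
        have hi1 : i < qn.1 := lt_of_lt_of_le hi hle
        rw [htt a i (hi1.trans (hlen a))]
        exact (hagr a ⟨i, hi1⟩).trans (hext ⟨i, hi⟩)
      · intro x _ hx
        refine ⟨?_, fun i hi => ?_⟩
        · show x qn.1 = _
          rw [hx _ (hlen a), htt a _ (hlen a)]
          exact hval a
        · show x i = _
          rw [hx _ (hi.trans (hlen a)), htt a _ (hi.trans (hlen a)), hqq i hi]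
          exact hagr a ⟨i, hi⟩)
  refine ⟨Φ, γ, v, H, fun f => ?_⟩
  obtain ⟨x, hx, hf⟩ := hΦ f
  rw [hf]
  exact hx

/-! ### From closed copies of the Baire space to superperfect maps -/

theorem hz_splitting (K : Type u) [LinearOrder K] [WellFoundedLT K] [Nonempty K] [NoMaxOrder K]
    (hseg : ∀ b : K, #(Set.Iio b) < #K) (hwc : WComp K)
    (h : (K → K) → (K → K))
    (hcl : ∀ x : K → K, (∀ b, ∃ y, ∀ i, i < b → h y i = x i) → ∃ y, h y = x)
    (hinv : ∀ y b, ∃ c, ∀ z, (∀ i, i < c → h z i = h y i) → ∀ i, i < b → z i = y i)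
    (l : K) (s : K → K) :
    ∃ (γ : K) (q : K → K), #K ≤ #{a | ∃ y, (∀ i, i < l → y i = s i) ∧
      (∀ i, i < γ → h y i = q i) ∧ h y γ = a} := by
  classical
  by_contra hcon
  push Not at hcon
  have hB := fun {ι : Type u} => hz_bounded K hseg hwc.1 (ι := ι)
  -- the levels of the tree of the image
  let Lev : (b : K) → Set (Set.Iio b → K) := fun b =>
    {p | ∃ y, (∀ i, i < l → y i = s i) ∧ ∀ i : Set.Iio b, h y i.1 = p i}
  have hlevbd : ∀ b, #(Lev b) < #K → ∃ m, ∀ y, (∀ i, i < l → y i = s i) → h y b < m := by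
    intro b hb
    have h1 : ∀ p : Lev b, ∃ m, ∀ y, (∀ i, i < l → y i = s i) →
        (∀ i : Set.Iio b, h y i.1 = p.1 i) → h y b < m := by
      intro p
      obtain ⟨m, hm⟩ := hB (hcon b (fun i => if hh : i < b then p.1 ⟨i, hh⟩ else i)) (fun a => a.1)
      refine ⟨m, fun y hy hyp => hm ⟨h y b, y, hy, fun i hi => ?_, rfl⟩⟩
      rw [dif_pos hi]
      exact hyp ⟨i, hi⟩
    choose m hm using h1
    obtain ⟨M, hM⟩ := hB hb m
    exact ⟨M, fun y hy => (hm ⟨fun i => h y i.1, y, hy, fun _ => rfl⟩ y hy fun _ => rfl).trans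
      (hM _)⟩
  have hlev : ∀ b, #(Lev b) < #K := by
    intro b
    induction b using WellFoundedLT.induction with
    | ind b ih =>
      have h1 := fun c : Set.Iio b => hlevbd c.1 (ih c.1 c.2)
      choose m hm using h1
      obtain ⟨M, hM⟩ := hB (hseg b) m
      have hlt : ∀ p : Lev b, ∀ i, p.1 i < M := by
        rintro ⟨p, y, hy, hp⟩ i
        show p i < M
        rw [← hp i]
        exact (hm i y hy).trans (hM i)
      let G : Lev b → Set (Set.Iio b × Set.Iio M) := fun p => {z | p.1 z.1 = z.2.1}
      have hG : Function.Injective G := by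
        intro p p' hpp
        apply Subtype.ext
        funext i
        have : (i, (⟨p.1 i, hlt p i⟩ : Set.Iio M)) ∈ G p := rfl
        rw [hpp] at this
        exact this.symm
      refine lt_of_le_of_lt (Cardinal.mk_le_of_injective hG) ?_
      rw [Cardinal.mk_set]
      apply hwc.1.isStrongLimit.isStrongPrelimit
      rw [Cardinal.mk_prod, Cardinal.lift_id, Cardinal.lift_id]
      exact Cardinal.mul_lt_of_lt hwc.1.isRegular.aleph0_le (hseg b) (hseg M)
  -- a closed discrete family
  let Y : K → K → K := fun a => Function.update s l a
  have hY : ∀ a, ∀ i, i < l → Y a i = s i := fun a i hi => Function.update_of_ne hi.ne _ _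
  obtain ⟨x, hx⟩ := hwc.2 {p | ∀ m, ∃ a, m < a ∧ ∀ i : Set.Iio p.1, h (Y a) i.1 = p.2 i}
    (by
      intro p hp c hc m
      obtain ⟨a, ha, hpa⟩ := hp m
      exact ⟨a, ha, fun i => hpa ⟨i.1, lt_of_lt_of_le i.2 hc⟩⟩)
    ⟨by
      intro b
      by_contra hno
      have h1 : ∀ p : Lev b, ∃ m, ∀ a, (∀ i : Set.Iio b, h (Y a) i.1 = p.1 i) → a ≤ m := by
        intro p
        by_contra hc
        push Not at hc
        refine hno ⟨p.1, fun m => ?_⟩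
        obtain ⟨a, ha, hma⟩ := hc m
        exact ⟨a, hma, ha⟩
      choose m hm using h1
      obtain ⟨M, hM⟩ := hB (hlev b) m
      exact absurd (hm ⟨fun i => h (Y M) i.1, Y M, hY M, fun _ => rfl⟩ M fun _ => rfl)
        (not_le.2 (hM _)), by
      intro b
      refine lt_of_le_of_lt (Cardinal.mk_le_mk_of_subset ?_) (hlev b)
      intro p hp
      obtain ⟨a, _, ha⟩ := hp l
      exact ⟨Y a, hY a, ha⟩⟩
  obtain ⟨y, rfl⟩ := hcl x (fun b => by
    obtain ⟨a, _, ha⟩ := hx b l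
    exact ⟨Y a, fun i hi => ha ⟨i, hi⟩⟩)
  obtain ⟨b, hb⟩ := exists_gt l
  obtain ⟨c, hc⟩ := hinv y b
  obtain ⟨a, ha, hya⟩ := hx c (y l)
  have h1 := hc (Y a) (fun i hi => hya ⟨i, hi⟩) l hb
  rw [show Y a l = a from Function.update_self _ _ _] at h1
  exact ha.ne h1.symm

theorem hz_of_closed (K : Type u) [LinearOrder K] [WellFoundedLT K] [Nonempty K] [NoMaxOrder K]
    (hseg : ∀ b : K, #(Set.Iio b) < #K) (hwc : WComp K)
    (C : Set (K → K)) (hC : IsClosed[bTop K K] C) (hh : HomeoToBaire K C) :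
    ∃ Φ γ v, SPMap K Φ γ v ∧ ∀ f, Φ f ∈ C := by
  letI := bTop K K
  obtain ⟨e⟩ : Nonempty (↥C ≃ₜ (K → K)) := hh
  let h : (K → K) → (K → K) := fun y => (e.symm y).1
  have hbasic : ∀ (b : K) (s : K → K), IsOpen {x : K → K | ∀ i, i < b → x i = s i} := fun b s =>
    TopologicalSpace.GenerateOpen.basic _ ⟨b, s, rfl⟩
  have hcont : Continuous h := continuous_subtype_val.comp e.symm.continuous
  have hcl : ∀ x : K → K, (∀ b, ∃ y, ∀ i, i < b → h y i = x i) → ∃ y, h y = x := by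
    intro x hx
    have hxC : x ∈ C := by
      by_contra hxC
      obtain ⟨b, hb⟩ := (hz_isOpen_iff K Cᶜ).1 hC.isOpen_compl x hxC
      obtain ⟨y, hy⟩ := hx b
      exact hb (h y) hy (e.symm y).2
    exact ⟨e ⟨x, hxC⟩, by simp [h]⟩
  have hinv : ∀ y b, ∃ c, ∀ z, (∀ i, i < c → h z i = h y i) → ∀ i, i < b → z i = y i := by
    intro y b
    have ho := (hbasic b y).preimage e.continuous
    obtain ⟨V, hV, hVe⟩ := isOpen_induced_iff.1 ho
    have hyV : h y ∈ V := by
      have : e.symm y ∈ Subtype.val ⁻¹' V := by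
        rw [hVe]
        intro i _
        simp
      exact this
    obtain ⟨c, hc⟩ := (hz_isOpen_iff K V).1 hV _ hyV
    refine ⟨c, fun z hz => ?_⟩
    have h1 : e.symm z ∈ Subtype.val ⁻¹' V := hc (h z) hz
    rw [hVe] at h1
    intro i hi
    simpa using h1 i hi
  obtain ⟨Φ, γ, v, H, hΦ⟩ := hz_fusion K (fun b g => hz_bounded K hseg hwc.1 (hseg b) g) h
    (fun _ _ => True) (fun _ _ _ _ _ => trivial) (fun _ _ _ _ _ => trivial) (fun _ _ _ => trivial)
    (by
      intro l s _
      obtain ⟨γ, q, hcard⟩ := hz_splitting K hseg hwc h hcl hinv l s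
      obtain ⟨w⟩ := (Cardinal.le_def _ _).1 hcard
      have hw := fun a : K => (w a).2
      choose Y hYs hYq hYv using hw
      obtain ⟨γ', hγ'⟩ := exists_gt γ
      have hL : ∀ a, ∃ L, l < L ∧ ∀ x : K → K, (∀ i, i < L → x i = Y a i) →
          ∀ i, i < γ' → h x i = h (Y a) i := by
        intro a
        have ho := (hbasic γ' (h (Y a))).preimage hcont
        obtain ⟨c, hc⟩ := (hz_isOpen_iff K _).1 ho (Y a) (fun _ _ => rfl)
        obtain ⟨d, hd⟩ := exists_gt (max l c)
        exact ⟨d, lt_of_le_of_lt (le_max_left _ _) hd, fun x hx =>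
          hc x fun i hi => hx i (hi.trans (lt_of_le_of_lt (le_max_right _ _) hd))⟩
      choose L hL1 hL2 using hL
      refine ⟨γ, fun a => (w a).1, L, Y, q, fun a b hab => w.injective (Subtype.ext hab),
        fun a => ⟨hL1 a, trivial, hYs a, fun x _ hx => ⟨?_, fun i hi => ?_⟩⟩⟩
      · exact (hL2 a x hx γ hγ').trans (hYv a)
      · exact (hL2 a x hx i (hi.trans hγ')).trans (hYq a i hi))
  refine ⟨Φ, γ, v, H, fun f => ?_⟩
  obtain ⟨x, _, hf⟩ := hΦ f
  rw [hf]
  exact (e.symm x).2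

/-- For weakly compact `K`, the Hurewicz dichotomy and the Miller-tree Hurewicz
dichotomy coincide. -/
theorem hurewicz_iff_millerHurewicz (K : Type u) [LinearOrder K]
    [WellFoundedLT K] (hseg : ∀ b : K, #(Set.Iio b) < #K)
    (hwc : WComp K) (A : Set (K → K)) :
    HD K A ↔ MillerHD K A := by
  haveI : NoMaxOrder K := hz_noMax K hseg hwc.1
  haveI : Nonempty K := Cardinal.mk_ne_zero_iff.1 hwc.1.ne_zero
  constructor
  · rintro (h | ⟨C, hCA, hC, hh⟩)
    · exact Or.inl h
    · obtain ⟨Φ, γ, v, H, hΦ⟩ := hz_of_closed K hseg hwc C hC hh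
      obtain ⟨T, hT, hTC⟩ := H.miller C hC hΦ
      exact Or.inr ⟨T, hT, hTC.trans hCA⟩
  · rintro (h | ⟨T, hT, hTA⟩)
    · exact Or.inl h
    · obtain ⟨Φ, γ, v, H, hΦ⟩ := hz_of_miller K
        (fun b g => hz_bounded K hseg hwc.1 (hseg b) g) T hT
      refine Or.inr ⟨Set.range Φ, ?_, H.isClosed_range, H.homeo⟩
      rintro _ ⟨f, rfl⟩
      exact hTA (hΦ f)
end

section
/- Let κ be a non-weakly compact uncountable cardinal with κ = κ^{<κ}. If every Σ¹₁ subset of κ^κ satisfies the Hurewicz dichotomy, then every Σ¹₁ subset of κ^κ is κ-Sacks measurable. -/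
open Cardinal Set Topology

universe u

namespace SacksAux

set_option linter.unusedSectionVars false
set_option linter.style.haveILetI false
section basic
variable {K : Type u} [LinearOrder K] [WellFoundedLT K]

theorem noMax (hseg : ∀ b : K, #(Set.Iio b) < #K) (hunc : ℵ₀ < #K) (b : K) : ∃ c, b < c := by
  by_contra hcon
  push Not at hcon
  have h1 : (Set.univ : Set K) ⊆ insert b (Set.Iio b) := by
    intro c _
    rcases (hcon c).lt_or_eq with h | h
    · exact Or.inr h
    · exact Or.inl h
  have h2 : #K ≤ #(Set.Iio b) + 1 := by
    rw [← Cardinal.mk_univ]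
    exact (Cardinal.mk_le_mk_of_subset h1).trans (Cardinal.mk_insert_le)
  exact absurd h2 (not_le.2 (Cardinal.add_lt_of_lt hunc.le (hseg b)
    (Cardinal.one_lt_aleph0.trans hunc)))

theorem reg (hseg : ∀ b : K, #(Set.Iio b) < #K) (hunc : ℵ₀ < #K)
    (hpow : Cardinal.powerlt #K #K = #K) (s : Set K) (hs : #s < #K) :
    ∃ c, ∀ b ∈ s, b < c := by
  by_contra hcon
  push Not at hcon
  have hIic : ∀ b : K, #(Set.Iic b) < #K := by
    intro b
    obtain ⟨c, hc⟩ := noMax hseg hunc b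
    refine lt_of_le_of_lt (Cardinal.mk_le_mk_of_subset ?_) (hseg c)
    intro x hx
    exact lt_of_le_of_lt hx hc
  have h1 : #K ≤ Cardinal.sum (fun b : s => #(Set.Iic b.1)) := by
    rw [← Cardinal.mk_univ]
    refine le_trans (Cardinal.mk_le_mk_of_subset (t := ⋃ b : s, Set.Iic b.1) ?_)
      (Cardinal.mk_iUnion_le_sum_mk)
    intro c _
    obtain ⟨b, hb, hcb⟩ := hcon c
    exact Set.mem_iUnion.2 ⟨⟨b, hb⟩, hcb⟩
  have h2 := Cardinal.sum_lt_prod (fun b : s => #(Set.Iic b.1)) (fun _ => #K)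
    (fun b => hIic b.1)
  rw [Cardinal.prod_const'] at h2
  have h3 : #K ^ #s ≤ #K := by
    conv_rhs => rw [← hpow]
    exact Cardinal.le_powerlt _ hs
  exact absurd (h1.trans_lt h2) (not_lt.2 h3)

theorem isOpen_iff [Nonempty K] {Y : Type u} (U : Set (K → Y)) :
    IsOpen[bTop K Y] U ↔ ∀ x ∈ U, ∃ b : K, ∀ y, (∀ i, i < b → y i = x i) → y ∈ U := by
  constructor
  · intro h
    change TopologicalSpace.GenerateOpen _ U at h
    induction h with
    | basic V hV =>
      obtain ⟨b, s, rfl⟩ := hV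
      intro x hx
      refine ⟨b, fun y hy i hi => ?_⟩
      rw [hy i hi]; exact hx i hi
    | univ => intro x _; exact ⟨Classical.arbitrary K, fun _ _ => trivial⟩
    | inter V W _ _ hV hW =>
      intro x hx
      obtain ⟨b, hb⟩ := hV x hx.1
      obtain ⟨c, hc⟩ := hW x hx.2
      exact ⟨max b c, fun y hy => ⟨hb y fun i hi => hy i (hi.trans_le (le_max_left _ _)),
        hc y fun i hi => hy i (hi.trans_le (le_max_right _ _))⟩⟩
    | sUnion S _ ih =>
      rintro x ⟨V, hV, hx⟩
      obtain ⟨b, hb⟩ := ih V hV x hx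
      exact ⟨b, fun y hy => ⟨V, hV, hb y hy⟩⟩
  · intro h
    letI := bTop K Y
    rw [isOpen_iff_forall_mem_open]
    intro x hx
    obtain ⟨b, hb⟩ := h x hx
    exact ⟨{y | ∀ i, i < b → y i = x i}, fun y hy => hb y hy,
      TopologicalSpace.GenerateOpen.basic _ ⟨b, x, rfl⟩, fun i _ => rfl⟩

/-- `q` extends `p`, for conditions. -/
def Ext (q p : K × (K → K)) : Prop := p.1 ≤ q.1 ∧ ∀ i, i < p.1 → q.2 i = p.2 i

theorem Ext.trans' {r q p : K × (K → K)} (h : Ext r q) (h' : Ext q p) : Ext r p :=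
  ⟨h'.1.trans h.1, fun i hi => (h.2 i (hi.trans_le h'.1)).trans (h'.2 i hi)⟩

theorem Ext.refl' (p : K × (K → K)) : Ext p p := ⟨le_rfl, fun _ _ => rfl⟩

open Classical in
noncomputable def G [Nonempty K] (α : K) (f : Set.Iio α → K × (K → K)) : K × (K → K) :=
  if h : ∃ q, ∀ β, Ext q (f β) then h.choose else Classical.arbitrary _

noncomputable def st {K : Type u} [LinearOrder K] [WellFoundedLT K] [Nonempty K]
    (E : Bool → K × (K → K) → K × (K → K)) (x : K → Bool) (α : K) :
    K × (K → K) :=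
  G α (fun β : Set.Iio α => E (x β.1) (st E x β.1))
termination_by (wellFounded_lt (α := K)).wrap α
decreasing_by exact β.2

theorem st_congr [Nonempty K] (E : Bool → K × (K → K) → K × (K → K)) (x y : K → Bool) (α : K)
    (h : ∀ β, β < α → x β = y β) : st E x α = st E y α := by
  induction α using WellFoundedLT.induction with
  | ind α ih =>
    rw [st, st]
    congr 1
    funext β
    rw [h β.1 β.2, ih β.1 β.2 (fun γ hγ => h γ (hγ.trans β.2))]

theorem chain_ext [Nonempty K]
    (hreg : ∀ s : Set K, #s < #K → ∃ c, ∀ b ∈ s, b < c)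
    (hseg : ∀ b : K, #(Set.Iio b) < #K)
    (α : K) (f : Set.Iio α → K × (K → K))
    (hf : ∀ β γ : Set.Iio α, β.1 < γ.1 → Ext (f γ) (f β)) : ∃ q, ∀ β, Ext q (f β) := by
  classical
  obtain ⟨c, hc⟩ := hreg (Set.range fun β => (f β).1) (Cardinal.mk_range_le.trans_lt (hseg α))
  refine ⟨⟨c, fun i => if h : ∃ β, i < (f β).1 then (f h.choose).2 i
    else Classical.arbitrary K⟩, fun β => ⟨(hc _ ⟨β, rfl⟩).le, fun i hi => ?_⟩⟩
  have h : ∃ β, i < (f β).1 := ⟨β, hi⟩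
  simp only [dif_pos h]
  rcases lt_trichotomy h.choose.1 β.1 with h1 | h1 | h1
  · exact ((hf _ _ h1).2 i h.choose_spec).symm
  · rw [Subtype.ext h1]
  · exact (hf _ _ h1).2 i hi

theorem st_ext [Nonempty K]
    (hreg : ∀ s : Set K, #s < #K → ∃ c, ∀ b ∈ s, b < c)
    (hseg : ∀ b : K, #(Set.Iio b) < #K)
    (E : Bool → K × (K → K) → K × (K → K)) (hE : ∀ b p, Ext (E b p) p)
    (x : K → Bool) (α : K) : ∀ β, β < α → Ext (st E x α) (E (x β) (st E x β)) := by
  induction α using WellFoundedLT.induction with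
  | ind α ih =>
    have h : ∃ q, ∀ β : Set.Iio α, Ext q (E (x β.1) (st E x β.1)) := by
      refine chain_ext hreg hseg α (fun β => E (x β.1) (st E x β.1)) ?_
      intro β γ hβγ
      exact (hE _ _).trans' (ih γ.1 γ.2 β.1 hβγ)
    intro β hβ
    rw [st, G, dif_pos h]
    exact h.choose_spec ⟨β, hβ⟩

theorem nd_ext {p q : Nd K K} (h : p.1 = q.1)
    (h2 : ∀ i (hi : i < p.1), p.2 ⟨i, hi⟩ = q.2 ⟨i, lt_of_lt_of_eq hi h⟩) : p = q := by
  obtain ⟨b, f⟩ := p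
  obtain ⟨c, g⟩ := q
  cases h
  congr 1
  funext i
  exact h2 i.1 i.2

theorem xRes_congr {x y : K → K} {b : K} (h : ∀ i, i < b → x i = y i) :
    xRes K x b = xRes K y b := nd_ext rfl (fun i hi => h i hi)

theorem xRes_inj {x y : K → K} {b : K} (h : xRes K x b = xRes K y b) :
    ∀ i, i < b → x i = y i := by
  intro i hi
  have := congrFun (eq_of_heq (Sigma.mk.inj h).2) ⟨i, hi⟩
  exact this

theorem xRes_val {p : Nd K K} {y : K → K} (h : p = xRes K y p.1) (i : Set.Iio p.1) :
    p.2 i = y i.1 := by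
  obtain ⟨b, f⟩ := p
  exact congrFun (eq_of_heq (Sigma.mk.inj h).2) i

theorem perfect_of_scheme [Nonempty K] (hnm : ∀ b : K, ∃ c, b < c)
    (Ψ : (K → Bool) → K → K) (D : (K → Bool) → K → K)
    (hD : ∀ x, StrictMono (D x))
    (hdiff : ∀ x y α, (∀ β, β < α → x β = y β) → x α ≠ y α →
      (∀ i, i < D x α → Ψ x i = Ψ y i) ∧ Ψ x (D x α) ≠ Ψ y (D x α)) :
    PerfectTree K {p | ∃ x, p = xRes K (Ψ x) p.1} ∧
      ∀ y ∈ body K {p | ∃ x, p = xRes K (Ψ x) p.1}, ∃ x, y = Ψ x := by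
  classical
  have least : ∀ x y : K → Bool, ∀ α, x α ≠ y α →
      ∃ α', α' ≤ α ∧ (∀ β, β < α' → x β = y β) ∧ x α' ≠ y α' := by
    intro x y α
    induction α using WellFoundedLT.induction with
    | ind α ih =>
      intro h
      by_cases h2 : ∃ β, β < α ∧ x β ≠ y β
      · obtain ⟨β, hβ, hne⟩ := h2
        obtain ⟨α', h3, h4⟩ := ih β hβ hne
        exact ⟨α', h3.trans hβ.le, h4⟩
      · push Not at h2
        exact ⟨α, le_rfl, h2, h⟩
  have key : ∀ x y c, (∀ i, i < c → Ψ x i = Ψ y i) → ∀ α, D x α < c → x α = y α := by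
    intro x y c h α hα
    by_contra hne
    obtain ⟨α', h1, h2, h3⟩ := least x y α hne
    exact (hdiff x y α' h2 h3).2 (h _ (((hD x).monotone h1).trans_lt hα))
  have key2 : ∀ x y c, (∀ α, D x α < c → x α = y α) → ∀ i, i < c → Ψ x i = Ψ y i := by
    intro x y c h i hi
    by_cases hxy : x = y
    · rw [hxy]
    obtain ⟨α, hα⟩ := Function.ne_iff.1 hxy
    obtain ⟨α', _, h2, h3⟩ := least x y α hα
    refine (hdiff x y α' h2 h3).1 i (hi.trans_le ?_)
    by_contra h4
    exact h3 (h α' (not_le.1 h4))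
  have lim : ∀ (X : Set K) (p : K → K), (∀ c ∈ X, ∃ x, ∀ i, i < c → Ψ x i = p i) →
      ∃ x, ∀ c ∈ X, ∀ i, i < c → Ψ x i = p i := by
    intro X p h
    choose! f hf using h
    have cons : ∀ c ∈ X, ∀ c' ∈ X, c ≤ c' → ∀ α, D (f c) α < c → f c α = f c' α := by
      intro c hc c' hc' hcc α hα
      refine key _ _ c (fun i hi => ?_) α hα
      rw [hf c hc i hi, hf c' hc' i (hi.trans_le hcc)]
    let x : K → Bool := fun α =>
      if h : ∃ c, c ∈ X ∧ D (f c) α < c then f h.choose α else false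
    refine ⟨x, fun c hc i hi => ?_⟩
    rw [← hf c hc i hi]
    refine (key2 (f c) x c (fun α hα => ?_) i hi).symm
    have h : ∃ c, c ∈ X ∧ D (f c) α < c := ⟨c, hc, hα⟩
    have hx : x α = f h.choose α := dif_pos h
    rw [hx]
    have hs := h.choose_spec
    rcases le_total c h.choose with h1 | h1
    · exact cons c hc _ hs.1 h1 α hα
    · exact (cons _ hs.1 c hc h1 α hs.2).symm
  refine ⟨⟨?_, ?_, ?_, ?_⟩, ?_⟩
  · exact ⟨xRes K (Ψ fun _ => false) (Classical.arbitrary K), fun _ => false, rfl⟩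
  · rintro p ⟨x, hx⟩ c hc
    exact ⟨x, nd_ext rfl (fun i hi => xRes_val hx ⟨i, lt_of_lt_of_le hi hc⟩)⟩
  · intro p hp h
    let p' : K → K := fun i => if h : i < p.1 then p.2 ⟨i, h⟩ else i
    obtain ⟨x, hx⟩ := lim (Set.Iio p.1) p' (by
      intro c hc
      obtain ⟨x, hx⟩ := h c hc
      refine ⟨x, fun i hi => ?_⟩
      have h2 : p' i = p.2 ⟨i, hi.trans hc⟩ := dif_pos (hi.trans hc)
      rw [h2]
      have := congrFun (eq_of_heq (Sigma.mk.inj hx).2) ⟨i, hi⟩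
      exact this.symm)
    refine ⟨x, nd_ext rfl ?_⟩
    intro i hi
    obtain ⟨d, hd, hd2⟩ := hp.2 i hi
    have := hx d hd2 i hd
    have h2 : p' i = p.2 ⟨i, hi⟩ := dif_pos hi
    rw [h2] at this
    exact this.symm
  · rintro p ⟨x, hx⟩
    obtain ⟨c, hc⟩ := hnm (D x p.1)
    have hle : p.1 ≤ D x p.1 := (hD x).le_apply
    let y : K → Bool := Function.update x p.1 (!(x p.1))
    have hd := hdiff x y p.1 (fun β hβ => by simp [y, Function.update_of_ne hβ.ne])
      (by simp [y])
    refine ⟨xRes K (Ψ x) (D x p.1), ⟨x, rfl⟩, ⟨hle, ?_⟩, Ψ x (D x p.1), ?_, Ψ y (D x p.1), ?_, hd.2⟩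
    · intro i
      exact (xRes_val hx i).symm
    · exact ⟨xRes K (Ψ x) c, ⟨x, rfl⟩, hc, fun i => rfl, rfl⟩
    · exact ⟨xRes K (Ψ y) c, ⟨y, rfl⟩, hc, fun i => (hd.1 i.1 i.2).symm, rfl⟩
  · intro y hy
    obtain ⟨x, hx⟩ := lim Set.univ y (by
      intro c _
      obtain ⟨x, hx⟩ := hy c
      exact ⟨x, fun i hi => (xRes_inj hx i hi).symm⟩)
    refine ⟨x, funext fun i => ?_⟩
    obtain ⟨c, hc⟩ := hnm i
    exact (hx c trivial i hc).symm

theorem fusion [Nonempty K] (hnm : ∀ b : K, ∃ c, b < c)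
    (hreg : ∀ s : Set K, #s < #K → ∃ c, ∀ b ∈ s, b < c)
    (hseg : ∀ b : K, #(Set.Iio b) < #K)
    (ψ : (K → K) → K → K) (R : K → (K → K) → Prop)
    (hE : ∀ p : K × (K → K), ∃ δ : K, ∃ q : Bool → K × (K → K), ∃ τ : Bool → K → K,
      (∀ b, p.1 < (q b).1 ∧ Ext (q b) p) ∧
      (∀ b w, (∀ i, i < (q b).1 → w i = (q b).2 i) → R p.1 w ∧ ∀ i, i ≤ δ → ψ w i = τ b i) ∧
      (∀ i, i < δ → τ false i = τ true i) ∧ τ false δ ≠ τ true δ) :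
    ∃ S, PerfectTree K S ∧ (∀ p ∈ S, ∃ w, p = xRes K (ψ w) p.1) ∧
      ∀ y ∈ body K S, ∃ w, y = ψ w ∧ ∀ α, ∃ c, α ≤ c ∧ R c w := by
  choose δ q τ h1 h2 h3 h4 using hE
  let E : Bool → K × (K → K) → K × (K → K) := fun b p => q p b
  have hext := st_ext hreg hseg E (fun b p => (h1 p b).2)
  have hlen : ∀ x, StrictMono (fun α => (st E x α).1) := by
    intro x β α h
    exact (h1 (st E x β) (x β)).1.trans_le (hext x α β h).1
  have hle : ∀ x α, α ≤ (st E x α).1 := fun x α => (hlen x).le_apply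
  have hchain : ∀ x β γ, β < γ → Ext (E (x γ) (st E x γ)) (E (x β) (st E x β)) :=
    fun x β γ h => (h1 _ _).2.trans' (hext x γ β h)
  have hlt : ∀ x α, α < (E (x α) (st E x α)).1 := fun x α => (hle x α).trans_lt (h1 _ _).1
  let W : (K → Bool) → K → K := fun x i => (E (x i) (st E x i)).2 i
  have hW : ∀ x α i, i < (E (x α) (st E x α)).1 → W x i = (E (x α) (st E x α)).2 i := by
    intro x α i hi
    rcases lt_trichotomy i α with h | h | h
    · exact ((hchain x i α h).2 i (hlt x i)).symm
    · rw [h]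
    · exact (hchain x α i h).2 i hi
  have hΨ : ∀ x α, R (st E x α).1 (W x) ∧
      ∀ i, i ≤ δ (st E x α) → ψ (W x) i = τ (st E x α) (x α) i := fun x α =>
    h2 (st E x α) (x α) (W x) (hW x α)
  have hdiff : ∀ x y α, (∀ β, β < α → x β = y β) → x α ≠ y α →
      (∀ i, i < δ (st E x α) → ψ (W x) i = ψ (W y) i) ∧
        ψ (W x) (δ (st E x α)) ≠ ψ (W y) (δ (st E x α)) := by
    intro x y α hxy hne
    have hst := st_congr E x y α hxy
    have hx := (hΨ x α).2
    have hy := (hΨ y α).2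
    rw [← hst] at hy
    constructor
    · intro i hi
      rw [hx i hi.le, hy i hi.le]
      rcases hxa : x α <;> rcases hya : y α
      · rfl
      · exact h3 _ i hi
      · exact (h3 _ i hi).symm
      · rfl
    · rw [hx _ le_rfl, hy _ le_rfl]
      rcases hxa : x α <;> rcases hya : y α
      · exact absurd (hxa.trans hya.symm) hne
      · exact h4 _
      · exact (h4 _).symm
      · exact absurd (hxa.trans hya.symm) hne
  have hD : ∀ x, StrictMono (fun α => δ (st E x α)) := by
    intro x β α h
    by_contra hcon
    have hcon : δ (st E x α) ≤ δ (st E x β) := not_lt.1 hcon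
    have aux : ∀ b, τ (st E x α) b (δ (st E x α)) = τ (st E x β) (x β) (δ (st E x α)) := by
      intro b
      have hb := (h2 (st E x α) b (E b (st E x α)).2 (fun i hi => rfl)).2 _ le_rfl
      have he := (h1 (st E x α) b).2.trans' (hext x α β h)
      have hb' := (h2 (st E x β) (x β) (E b (st E x α)).2 he.2).2 _ hcon
      rw [← hb, ← hb']
    exact h4 (st E x α) ((aux false).trans (aux true).symm)
  obtain ⟨hP, hB⟩ := perfect_of_scheme hnm (fun x => ψ (W x)) (fun x α => δ (st E x α)) hD hdiff
  refine ⟨_, hP, ?_, ?_⟩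
  · rintro p ⟨x, hx⟩
    exact ⟨W x, hx⟩
  · intro y hy
    obtain ⟨x, hx⟩ := hB y hy
    exact ⟨W x, hx, fun α => ⟨_, hle x α, (hΨ x α).1⟩⟩

noncomputable def hh {K : Type u} [LinearOrder K] [WellFoundedLT K]
    (L R : Nd K K → K) (z : K → K) (j : K) : K :=
  if z j = j then R ⟨j, fun i : Set.Iio j => hh L R z i.1⟩
  else L ⟨j, fun i : Set.Iio j => hh L R z i.1⟩
termination_by (wellFounded_lt (α := K)).wrap j
decreasing_by all_goals exact i.2

theorem hh_eq (L R : Nd K K → K) (z : K → K) (j : K) :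
    hh L R z j = if z j = j then R (xRes K (hh L R z) j) else L (xRes K (hh L R z) j) := by
  rw [hh]; rfl

theorem hh_congr (L R : Nd K K → K) (z w : K → K) (c : K) (h : ∀ i, i < c → z i = w i) :
    ∀ i, i < c → hh L R z i = hh L R w i := by
  intro i
  induction i using WellFoundedLT.induction with
  | ind i ih =>
    intro hi
    have h1 : xRes K (hh L R z) i = xRes K (hh L R w) i :=
      xRes_congr fun j hj => ih j hj (hj.trans hi)
    rw [hh_eq, hh_eq L R w, h i hi, h1]

/-- `z` codes a right turn at a splitting node at position `j`. -/
def One (L R : Nd K K → K) (z : K → K) (j : K) : Prop :=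
  z j = j ∧ L (xRes K (hh L R z) j) ≠ R (xRes K (hh L R z) j)

theorem one_congr (L R : Nd K K → K) (z w : K → K) (c : K) (h : ∀ i, i < c → z i = w i) 
    (j : K) (hj : j < c) (h1 : One L R z j) : One L R w j := by
  have h2 : xRes K (hh L R z) j = xRes K (hh L R w) j :=
      xRes_congr (hh_congr L R z w j fun i hi => h i (hi.trans hj))
  unfold One at h1 ⊢
  rwa [← h2, ← h j hj]

theorem one_iff (L R : Nd K K → K) (z : K → K) (j : K) :
    One L R z j ↔ (hh L R z j = R (xRes K (hh L R z) j) ∧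
      L (xRes K (hh L R z) j) ≠ R (xRes K (hh L R z) j)) := by
  unfold One
  constructor
  · rintro ⟨h1, h2⟩
    refine ⟨?_, h2⟩
    rw [hh_eq, if_pos h1]
  · rintro ⟨h1, h2⟩
    refine ⟨?_, h2⟩
    by_contra h3
    rw [hh_eq, if_neg h3] at h1
    exact h2 h1

theorem one_of_hh_eq (L R : Nd K K → K) (z w : K → K) (h : hh L R z = hh L R w) (j : K) :
    One L R z j ↔ One L R w j := by
  rw [one_iff, one_iff, h]

/-- `hh` only depends on the right turns. -/
theorem hh_eq_of_one (L R : Nd K K → K) (z w : K → K) (h : ∀ j, z j = j ↔ One L R w j) :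
    hh L R z = hh L R w := by
  funext j
  induction j using WellFoundedLT.induction with
  | ind j ih =>
    have h1 : xRes K (hh L R z) j = xRes K (hh L R w) j := xRes_congr ih
    rw [hh_eq, hh_eq L R w, h1]
    by_cases hs : L (xRes K (hh L R w) j) = R (xRes K (hh L R w) j)
    · rw [hs]; simp
    · have : z j = j ↔ w j = j := by
        rw [h j]
        exact ⟨fun h => h.1, fun h => ⟨h, hs⟩⟩
      simp only [this]

theorem hh_mem {T : Set (Nd K K)} (hT : PerfectTree K T) (L R : Nd K K → K)
    (hL : ∀ p ∈ T, L p ∈ splitVals K T p) (hR : ∀ p ∈ T, R p ∈ splitVals K T p)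
    (z : K → K) : hh L R z ∈ body K T := by
  obtain ⟨⟨r, hr⟩, hsub, hsup, -⟩ := hT
  intro j
  induction j using WellFoundedLT.induction with
  | ind j ih =>
    by_cases h0 : ∃ c, c < j
    · by_cases hlim : ∀ c, c < j → ∃ d, c < d ∧ d < j
      · exact hsup _ ⟨h0, hlim⟩ (fun c hc => ih c hc)
      · push Not at hlim
        obtain ⟨c, hc, hno⟩ := hlim
        have hv : hh L R z c ∈ splitVals K T (xRes K (hh L R z) c) := by
          rw [hh_eq]
          split_ifs
          · exact hR _ (ih c hc)
          · exact hL _ (ih c hc)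
        obtain ⟨q, hq, hcq, hq1, hq2⟩ := hv
        have hjq : j ≤ q.1 := hno q.1 hcq
        have := hsub q hq j hjq
        convert this using 1
        refine nd_ext rfl ?_
        intro i hi
        rcases lt_trichotomy i c with h | h | h
        · exact (hq1 ⟨i, h⟩).symm
        · subst h; exact hq2.symm
        · exact absurd hi (not_lt.2 (hno i h))
    · push Not at h0
      have := hsub r hr j (h0 _)
      convert this using 1
      refine nd_ext rfl ?_
      intro i hi
      exact absurd hi (not_lt.2 (h0 i))

theorem split_unb {T : Set (Nd K K)} (hT : PerfectTree K T) (L R : Nd K K → K)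
    (hL : ∀ p ∈ T, L p ∈ splitVals K T p) (hR : ∀ p ∈ T, R p ∈ splitVals K T p)
    (hLR : ∀ p ∈ T, (∃ a ∈ splitVals K T p, ∃ a' ∈ splitVals K T p, a ≠ a') → L p ≠ R p)
    (z : K → K) (c : K) (hz : ∀ j, c ≤ j → z j ≠ j) :
    ∃ j, c ≤ j ∧ L (xRes K (hh L R z) j) ≠ R (xRes K (hh L R z) j) := by
  have hb := hh_mem hT L R hL hR z
  obtain ⟨-, hsub, hsup, hsplit⟩ := hT
  obtain ⟨q, hq, ⟨hcq, hqext⟩, hqs⟩ := hsplit _ (hb c)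
  by_contra hcon
  push Not at hcon
  have hval : ∀ i (hi : i < q.1), q.2 ⟨i, hi⟩ = hh L R z i := by
    intro i
    induction i using WellFoundedLT.induction with
    | ind i ih =>
      intro hi
      rcases lt_or_ge i c with h | h
      · exact hqext ⟨i, h⟩
      · have hmem : q.2 ⟨i, hi⟩ ∈ splitVals K T (xRes K (hh L R z) i) :=
          ⟨q, hq, hi, fun k => ih k.1 k.2 (lt_trans k.2 hi), rfl⟩
        have hmem2 : hh L R z i ∈ splitVals K T (xRes K (hh L R z) i) := by
          rw [hh_eq, if_neg (hz i h)]
          exact hL _ (hb i)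
        by_contra hne
        exact hLR _ (hb i) ⟨_, hmem, _, hmem2, hne⟩ (hcon i h)
  have hqe : q = xRes K (hh L R z) q.1 := nd_ext rfl (fun i hi => hval i hi)
  have h1 := hLR q hq hqs
  rw [hqe] at h1
  exact h1 (hcon q.1 hcq)

/-- The codes that record the next right turn. -/
def ZZ (L R : Nd K K → K) : Set (K → K) :=
  {z | ∀ i, i ≤ z i ∧ One L R z (z i) ∧ ∀ j, i ≤ j → j < z i → ¬ One L R z j}

theorem ZZ_inj (L R : Nd K K → K) (z w : K → K) (hz : z ∈ ZZ L R) (hw : w ∈ ZZ L R)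
    (h : hh L R z = hh L R w) : z = w := by
  funext i
  have ho := one_of_hh_eq L R z w h
  obtain ⟨a1, a2, a3⟩ := hz i
  obtain ⟨b1, b2, b3⟩ := hw i
  rcases lt_trichotomy (z i) (w i) with h | h | h
  · exact absurd ((ho _).1 a2) (b3 _ a1 h)
  · exact h
  · exact absurd ((ho _).2 b2) (a3 _ b1 h)

theorem ZZ_closed [Nonempty K] (hnm : ∀ b : K, ∃ c, b < c) (L R : Nd K K → K) :
    IsClosed[bTop K K] (ZZ L R) := by
  letI := bTop K K
  rw [← isOpen_compl_iff]
  refine (isOpen_iff _).2 ?_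
  intro z hz
  have hz : ∃ i, ¬ (i ≤ z i ∧ One L R z (z i) ∧ ∀ j, i ≤ j → j < z i → ¬ One L R z j) := by
    by_contra h
    push Not at h
    exact hz h
  obtain ⟨i, hi⟩ := hz
  obtain ⟨b, hb⟩ := hnm (max i (z i))
  refine ⟨b, fun y hy hyZ => hi ?_⟩
  have hyi : y i = z i := hy i ((le_max_left _ _).trans_lt hb)
  obtain ⟨h1, h2, h3⟩ := hyZ i
  have hzb : z i < b := (le_max_right _ _).trans_lt hb
  rw [hyi] at h1 h2 h3
  exact ⟨h1, one_congr L R y z b hy _ hzb h2, fun j hj hj2 ho => h3 j hj hj2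
    (one_congr L R z y b (fun i hi => (hy i hi).symm) j (hj2.trans hzb) ho)⟩

theorem ev_bdd [Nonempty K]
    (hnm : ∀ b : K, ∃ c, b < c)
    (hreg : ∀ s : Set K, #s < #K → ∃ c, ∀ b ∈ s, b < c)
    (hseg : ∀ b : K, #(Set.Iio b) < #K) (B : Set (K → K)) (hB : IsKK K B) :
    ∃ x : K → K, ∀ y ∈ B, ∃ b : K, ∀ i, b < i → y i ≤ x i := by
  obtain ⟨C, hC, rfl⟩ := hB
  have h1 : ∀ b i, ∃ a, ∀ z ∈ C b, z i ≤ a := by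
    intro b i
    obtain ⟨V, hV, hVc, hcov⟩ := hC b (Set.range fun a : K => {z : K → K | z i = a}) (by
      rintro _ ⟨a, rfl⟩
      refine (isOpen_iff _).2 ?_
      intro z hz
      obtain ⟨c, hc⟩ := hnm i
      exact ⟨c, fun y hy => (hy i hc).trans hz⟩) (by
      intro z _
      exact ⟨_, ⟨z i, rfl⟩, rfl⟩)
    have hV' : ∀ U ∈ V, ∃ a : K, {z : K → K | z i = a} = U := fun U hU => hV hU
    choose! f hf using hV'
    obtain ⟨c, hc⟩ := hreg (f '' V) (Cardinal.mk_image_le.trans_lt hVc)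
    refine ⟨c, fun z hz => ?_⟩
    obtain ⟨U, hU, hzU⟩ := hcov hz
    have := hf U hU
    rw [← this] at hzU
    have hzU : z i = f U := hzU
    rw [hzU]
    exact (hc _ ⟨U, hU, rfl⟩).le
  choose a ha using h1
  have h2 : ∀ i, ∃ c, ∀ b, b < i → a b i ≤ c := by
    intro i
    obtain ⟨c, hc⟩ := hreg ((fun b => a b i) '' Set.Iio i) (Cardinal.mk_image_le.trans_lt (hseg i))
    exact ⟨c, fun b hb => (hc _ ⟨b, hb, rfl⟩).le⟩
  choose x hx using h2
  refine ⟨x, fun y hy => ?_⟩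
  obtain ⟨b, hb⟩ := Set.mem_iUnion.1 hy
  exact ⟨b, fun i hi => (ha b i y hb).trans (hx i b hi)⟩

theorem gap_step {T : Set (Nd K K)} (hnm : ∀ b : K, ∃ c, b < c) (hT : PerfectTree K T)
    (L R : Nd K K → K)
    (hL : ∀ p ∈ T, L p ∈ splitVals K T p) (hR : ∀ p ∈ T, R p ∈ splitVals K T p)
    (hLR : ∀ p ∈ T, (∃ a ∈ splitVals K T p, ∃ a' ∈ splitVals K T p, a ≠ a') → L p ≠ R p)
    (x : K → K) (p : K × (K → K)) :
    ∃ δ : K, ∃ q : Bool → K × (K → K), ∃ τ : Bool → K → K,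
      (∀ b, p.1 < (q b).1 ∧ Ext (q b) p) ∧
      (∀ b w, (∀ i, i < (q b).1 → w i = (q b).2 i) →
        (∃ i, p.1 ≤ i ∧ ∃ j, i ≤ j ∧ x i < j ∧ One L R w j ∧ ∀ k, i ≤ k → k < j → ¬ One L R w k) ∧
          ∀ i, i ≤ δ → hh L R w i = τ b i) ∧
      (∀ i, i < δ → τ false i = τ true i) ∧ τ false δ ≠ τ true δ := by
  classical
  obtain ⟨c, z⟩ := p
  choose nb hnb using hnm
  let z1 : K → K := fun j => if j < c then z j else nb j
  obtain ⟨j0, hcj0, hs0⟩ := split_unb hT L R hL hR hLR z1 c (by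
    intro j hj
    simp only [z1, if_neg (not_lt.2 hj)]
    exact (hnb j).ne')
  let i := nb j0
  have hi : j0 < i := hnb j0
  let z2 : Bool → K → K := fun b j =>
    if j < c then z j else if j = j0 ∧ b = true then j0 else nb j
  have hz2 : ∀ b j, j0 < j → z2 b j = nb j := by
    intro b j hj
    simp only [z2, if_neg (not_lt.2 (hcj0.trans hj.le))]
    rw [if_neg]
    rintro ⟨h, -⟩
    exact hj.ne' h
  have hz21 : ∀ b j, j < j0 → z2 b j = z1 j := by
    intro b j hj
    simp only [z2, z1]
    split_ifs with h1 h2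
    · rfl
    · exact absurd h2.1 hj.ne
    · rfl
  have hsp : ∀ b, ∃ j, max i (nb (x i)) ≤ j ∧
      L (xRes K (hh L R (z2 b)) j) ≠ R (xRes K (hh L R (z2 b)) j) := by
    intro b
    refine split_unb hT L R hL hR hLR (z2 b) _ ?_
    intro j hj
    rw [hz2 b j (hi.trans_le ((le_max_left _ _).trans hj))]
    exact (hnb j).ne'
  choose j hj hjs using hsp
  have hij : ∀ b, i ≤ j b := fun b => (le_max_left _ _).trans (hj b)
  have hxj : ∀ b, x i < j b := fun b => (hnb _).trans_le ((le_max_right _ _).trans (hj b))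
  let z3 : Bool → K → K := fun b k => if k = j b then k else z2 b k
  have hz3j : ∀ b, z3 b (j b) = j b := fun b => by simp [z3]
  have hz3 : ∀ b k, k ≠ j b → z3 b k = z2 b k := fun b k hk => by simp only [z3, if_neg hk]
  have hj0j : ∀ b, j0 < j b := fun b => hi.trans_le (hij b)
  have hz31 : ∀ b k, k < j0 → z3 b k = z1 k := fun b k hk => by
    rw [hz3 b k (hk.trans (hj0j b)).ne, hz21 b k hk]
  have hx1 : ∀ b, xRes K (hh L R (z3 b)) j0 = xRes K (hh L R z1) j0 := fun b =>
    xRes_congr (hh_congr L R _ _ j0 (hz31 b))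
  refine ⟨j0, fun b => ⟨nb (j b), z3 b⟩, fun b => hh L R (z3 b), ?_, ?_, ?_, ?_⟩
  · intro b
    have h1 : c < nb (j b) := hcj0.trans_lt ((hj0j b).trans (hnb _))
    refine ⟨h1, h1.le, fun k hk => ?_⟩
    have hk : k < c := hk
    change z3 b k = z k
    rw [hz3 b k (hk.trans_le (hcj0.trans (hj0j b).le)).ne]
    simp only [z2, if_pos hk]
  · intro b w hw
    have hw : ∀ k, k < nb (j b) → w k = z3 b k := hw
    refine ⟨⟨i, hcj0.trans hi.le, j b, hij b, hxj b, ?_, ?_⟩, ?_⟩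
    · refine one_congr L R (z3 b) w (nb (j b)) (fun k hk => (hw k hk).symm) _ (hnb _) ?_
      refine ⟨hz3j b, ?_⟩
      have : xRes K (hh L R (z3 b)) (j b) = xRes K (hh L R (z2 b)) (j b) :=
        xRes_congr (hh_congr L R _ _ _ fun k hk => hz3 b k hk.ne)
      rw [this]
      exact hjs b
    · intro k hk hkj ho
      have h1 := ho.1
      rw [hw k (hkj.trans (hnb _)), hz3 b k hkj.ne, hz2 b k (hi.trans_le hk)] at h1
      exact (hnb k).ne' h1
    · intro k hk
      exact hh_congr L R w (z3 b) _ hw k (hk.trans_lt ((hj0j b).trans (hnb _)))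
  · intro k hk
    refine hh_congr L R _ _ j0 (fun k hk => ?_) k hk
    rw [hz31 _ k hk, hz31 _ k hk]
  · have hf : z3 false j0 ≠ j0 := by
      rw [hz3 _ _ (hj0j _).ne]
      simp only [z2, if_neg (not_lt.2 hcj0)]
      simpa using (hnb j0).ne'
    have ht : z3 true j0 = j0 := by
      rw [hz3 _ _ (hj0j _).ne]
      simp [z2, if_neg (not_lt.2 hcj0)]
    change hh L R (z3 false) j0 ≠ hh L R (z3 true) j0
    rw [hh_eq, hh_eq L R (z3 true), if_neg hf, if_pos ht, hx1, hx1]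
    exact hs0

/-- A code with unboundedly many right turns and long gaps has a normal form. -/
theorem normal_form (L R : Nd K K → K) (x w : K → K)
    (hw : ∀ α, ∃ c, α ≤ c ∧ ∃ i, c ≤ i ∧ ∃ j, i ≤ j ∧ x i < j ∧ One L R w j ∧
      ∀ k, i ≤ k → k < j → ¬ One L R w k) :
    ∃ z ∈ ZZ L R, hh L R z = hh L R w ∧ ∀ α, ∃ i, α ≤ i ∧ x i < z i := by
  have h1 : ∀ i, ∃ j, i ≤ j ∧ One L R w j ∧ ∀ k, i ≤ k → k < j → ¬ One L R w k := by
    intro i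
    obtain ⟨c, hc, i', hi', j, hj, -, ho, -⟩ := hw i
    have hne : {j | i ≤ j ∧ One L R w j}.Nonempty := ⟨j, hc.trans (hi'.trans hj), ho⟩
    let m := (wellFounded_lt (α := K)).min _ hne
    have hm := (wellFounded_lt (α := K)).min_mem _ hne
    refine ⟨m, hm.1, hm.2, fun k hk hkm hko => ?_⟩
    exact (wellFounded_lt (α := K)).not_lt_min _ (show k ∈ {j | i ≤ j ∧ One L R w j} from ⟨hk, hko⟩) hkm
  choose z hz1 hz2 hz3 using h1
  have hfix : ∀ j, z j = j ↔ One L R w j := by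
    intro j
    constructor
    · intro h
      have := hz2 j
      rwa [h] at this
    · intro h
      rcases (hz1 j).lt_or_eq with h2 | h2
      · exact absurd h (hz3 j j le_rfl h2)
      · exact h2.symm
  have hh' := hh_eq_of_one L R z w hfix
  have ho := one_of_hh_eq L R z w hh'
  refine ⟨z, fun i => ⟨hz1 i, (ho _).2 (hz2 i), fun j hj hjz h => hz3 i j hj hjz ((ho _).1 h)⟩,
    hh', fun α => ?_⟩
  obtain ⟨c, hc, i, hi, j, hj, hxj, hoj, hno⟩ := hw α
  refine ⟨i, hc.trans hi, hxj.trans_le ?_⟩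
  by_contra hlt
  exact hno (z i) (hz1 i) (not_le.1 hlt) (hz2 i)

theorem inj_step [Nonempty K] (hnm : ∀ b : K, ∃ c, b < c) (ψ : (K → K) → K → K)
    (hinj : Function.Injective ψ)
    (hcont : ∀ z b, ∃ c, ∀ w, (∀ i, i < c → w i = z i) → ∀ i, i < b → ψ w i = ψ z i)
    (p : K × (K → K)) :
    ∃ δ : K, ∃ q : Bool → K × (K → K), ∃ τ : Bool → K → K,
      (∀ b, p.1 < (q b).1 ∧ Ext (q b) p) ∧
      (∀ b w, (∀ i, i < (q b).1 → w i = (q b).2 i) → True ∧ ∀ i, i ≤ δ → ψ w i = τ b i) ∧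
      (∀ i, i < δ → τ false i = τ true i) ∧ τ false δ ≠ τ true δ := by
  classical
  obtain ⟨c, z⟩ := p
  choose nb hnb using hnm
  let z' : Bool → K → K := fun b => if b then Function.update z c (nb (z c)) else z
  have hz' : ∀ b i, i < c → z' b i = z i := by
    intro b i hi
    cases b <;> simp [z', Function.update_of_ne hi.ne]
  have hne : z' false ≠ z' true := by
    intro h
    have := congrFun h c
    simp [z'] at this
    exact (hnb (z c)).ne this
  have hne2 : {i | ψ (z' false) i ≠ ψ (z' true) i}.Nonempty :=
    Function.ne_iff.1 (fun h => hne (hinj h))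
  let δ := (wellFounded_lt (α := K)).min _ hne2
  have hδ : ψ (z' false) δ ≠ ψ (z' true) δ := (wellFounded_lt (α := K)).min_mem _ hne2
  have hδ2 : ∀ i, i < δ → ψ (z' false) i = ψ (z' true) i := by
    intro i hi
    by_contra h
    exact (wellFounded_lt (α := K)).not_lt_min _ (show i ∈ _ from h) hi
  have hm : ∀ b, ∃ m, ∀ w, (∀ i, i < m → w i = z' b i) → ∀ i, i < nb δ → ψ w i = ψ (z' b) i :=
    fun b => hcont (z' b) (nb δ)
  choose m hm using hm
  refine ⟨δ, fun b => ⟨max (nb c) (m b), z' b⟩, fun b => ψ (z' b), ?_, ?_, hδ2, hδ⟩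
  · intro b
    have h1 : c < max (nb c) (m b) := (hnb c).trans_le (le_max_left _ _)
    exact ⟨h1, h1.le, hz' b⟩
  · intro b w hw
    exact ⟨trivial, fun i hi => hm b w (fun k hk => hw k (hk.trans_le (le_max_right _ _))) i
      (hi.trans_lt (hnb δ))⟩

theorem cont_mod [Nonempty K] (f : (K → K) → K → K)
    (hf : @Continuous _ _ (bTop K K) (bTop K K) f) (z : K → K) (b : K) :
    ∃ c, ∀ w, (∀ i, i < c → w i = z i) → ∀ i, i < b → f w i = f z i := by
  letI := bTop K K
  have hU : IsOpen {y : K → K | ∀ i, i < b → y i = f z i} :=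
    TopologicalSpace.GenerateOpen.basic _ ⟨b, f z, rfl⟩
  obtain ⟨c, hc⟩ := (isOpen_iff _).1 (hU.preimage hf) z (fun _ _ => rfl)
  exact ⟨c, fun w hw => hc w hw⟩

theorem hh_cont [Nonempty K] (L R : Nd K K → K) :
    @Continuous _ _ (bTop K K) (bTop K K) (hh L R) := by
  letI := bTop K K
  rw [continuous_def]
  intro U hU
  refine (isOpen_iff _).2 ?_
  intro z hz
  obtain ⟨b, hb⟩ := (isOpen_iff _).1 hU _ hz
  exact ⟨b, fun y hy => hb _ (hh_congr L R y z b hy)⟩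

theorem sigma_preimage [Nonempty K] (h : (K → K) → K → K)
    (hh : @Continuous _ _ (bTop K K) (bTop K K) h) (Z : Set (K → K)) (hZ : IsClosed[bTop K K] Z)
    (A : Set (K → K)) (hA : Sigma11 K A) : Sigma11 K {z | z ∈ Z ∧ h z ∈ A} := by
  letI := bTop K K
  obtain ⟨C, hC, rfl⟩ := hA
  refine ⟨{p | p.1 ∈ Z ∧ (h p.1, p.2) ∈ C}, ?_, ?_⟩
  · exact (hZ.preimage continuous_fst).inter
      (hC.preimage ((hh.comp continuous_fst).prodMk continuous_snd))
  · ext z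
    constructor
    · rintro ⟨hz, ⟨y, w⟩, hC, hy⟩
      have hy : y = h z := hy
      subst hy
      exact ⟨(z, w), ⟨hz, hC⟩, rfl⟩
    · rintro ⟨⟨y, w⟩, ⟨hz, hC⟩, hy⟩
      have hy : y = z := hy
      subst hy
      exact ⟨hz, _, hC, rfl⟩

end basic
end SacksAux

/-- If `K` is not weakly compact and all Σ¹₁ subsets of `K → K` satisfy the
Hurewicz dichotomy, then every Σ¹₁ subset is κ-Sacks measurable. -/
theorem sacks_measurable_of_hurewicz (K : Type u) [LinearOrder K] [WellFoundedLT K]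
    (hseg : ∀ b : K, #(Set.Iio b) < #K)
    (hunc : ℵ₀ < #K) (hpow : Cardinal.powerlt #K #K = #K)
    (hnwc : ¬ WComp K)
    (hHD : ∀ A : Set (K → K), Sigma11 K A → HD K A)
    (A : Set (K → K)) (hA : Sigma11 K A) :
    ∀ T, PerfectTree K T → ∃ S, PerfectTree K S ∧ S ⊆ T ∧
      (body K S ⊆ A ∨ body K S ∩ A = ∅) := by
  intro T hT
  have hne : Nonempty K := by
    rw [← Cardinal.mk_ne_zero_iff]
    exact (Cardinal.aleph0_pos.trans hunc).ne'
  have hnm := SacksAux.noMax hseg hunc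
  have hreg := SacksAux.reg hseg hunc hpow
  have hLR : ∀ p : Nd K K, ∃ a b : K, p ∈ T → a ∈ splitVals K T p ∧ b ∈ splitVals K T p ∧
      ((∃ a ∈ splitVals K T p, ∃ a' ∈ splitVals K T p, a ≠ a') → a ≠ b) := by
    intro p
    by_cases hp : p ∈ T
    · by_cases hs : ∃ a ∈ splitVals K T p, ∃ a' ∈ splitVals K T p, a ≠ a'
      · obtain ⟨a, ha, b, hb, hab⟩ := hs
        exact ⟨a, b, fun _ => ⟨ha, hb, fun _ => hab⟩⟩
      · obtain ⟨q, hq, ⟨hpq, hqe⟩, hqs⟩ := hT.2.2.2 p hp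
        rcases hpq.lt_or_eq with h | h
        · have : q.2 ⟨p.1, h⟩ ∈ splitVals K T p := ⟨q, hq, h, hqe, rfl⟩
          exact ⟨_, _, fun _ => ⟨this, this, fun h => absurd h hs⟩⟩
        · have : p = q := SacksAux.nd_ext h (fun i hi => (hqe ⟨i, hi⟩).symm)
          rw [← this] at hqs
          exact absurd hqs hs
    · exact ⟨Classical.arbitrary K, Classical.arbitrary K, fun h => absurd h hp⟩
  choose L R hLR using hLR
  have hL : ∀ p ∈ T, L p ∈ splitVals K T p := fun p hp => (hLR p hp).1
  have hR : ∀ p ∈ T, R p ∈ splitVals K T p := fun p hp => (hLR p hp).2.1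
  have hLR : ∀ p ∈ T, (∃ a ∈ splitVals K T p, ∃ a' ∈ splitVals K T p, a ≠ a') → L p ≠ R p :=
    fun p hp => (hLR p hp).2.2
  have hmem := SacksAux.hh_mem hT L R hL hR
  rcases hHD _ (SacksAux.sigma_preimage (SacksAux.hh L R) (SacksAux.hh_cont L R)
      (SacksAux.ZZ L R) (SacksAux.ZZ_closed hnm L R) A hA) with ⟨B, hB, hAB⟩ | ⟨C, hCA, -, hC⟩
  · obtain ⟨x, hx⟩ := SacksAux.ev_bdd hnm hreg hseg B hB
    obtain ⟨S, hS, hS1, hS2⟩ := SacksAux.fusion hnm hreg hseg (SacksAux.hh L R)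
      (fun c w => ∃ i, c ≤ i ∧ ∃ j, i ≤ j ∧ x i < j ∧ SacksAux.One L R w j ∧
        ∀ k, i ≤ k → k < j → ¬ SacksAux.One L R w k)
      (SacksAux.gap_step hnm hT L R hL hR hLR x)
    refine ⟨S, hS, ?_, Or.inr ?_⟩
    · intro p hp
      obtain ⟨w, hw⟩ := hS1 p hp
      rw [hw]
      exact hmem w p.1
    · ext y
      simp only [Set.mem_inter_iff, Set.mem_empty_iff_false, iff_false, not_and]
      intro hy hyA
      obtain ⟨w, rfl, hw⟩ := hS2 y hy
      obtain ⟨z, hz, hzw, hzx⟩ := SacksAux.normal_form L R x w hw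
      obtain ⟨b, hb⟩ := hx z (hAB ⟨hz, by rw [hzw]; exact hyA⟩)
      obtain ⟨b', hb'⟩ := hnm b
      obtain ⟨i, hi, hxi⟩ := hzx b'
      exact absurd (hb i (hb'.trans_le hi)) (not_le.2 hxi)
  · letI := bTop K K
    obtain ⟨e⟩ := hC
    let ψ : (K → K) → K → K := fun z => SacksAux.hh L R (e.symm z).1
    have hinj : Function.Injective ψ := by
      intro z w h
      have h1 := SacksAux.ZZ_inj L R _ _ (hCA (e.symm z).2).1 (hCA (e.symm w).2).1 h
      exact e.symm.injective (Subtype.ext h1)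
    have hcont : @Continuous _ _ (bTop K K) (bTop K K) ψ := by
      exact (SacksAux.hh_cont L R).comp (continuous_subtype_val.comp e.symm.continuous)
    obtain ⟨S, hS, hS1, hS2⟩ := SacksAux.fusion hnm hreg hseg ψ (fun _ _ => True)
      (SacksAux.inj_step hnm ψ hinj (SacksAux.cont_mod ψ hcont))
    refine ⟨S, hS, ?_, Or.inl ?_⟩
    · intro p hp
      obtain ⟨w, hw⟩ := hS1 p hp
      rw [hw]
      exact hmem _ p.1
    · intro y hy
      obtain ⟨w, rfl, -⟩ := hS2 y hy
      exact (hCA (e.symm w).2).2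
end
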